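/- For every c > 0 there exist constants N > 0 and C > 0 such that for all ν ≥ N, every positive integer k, and every j that is the k-th positive zero of J_ν with j ≥ (1+c)ν, one has | j·g(ν/j) − (k − 1/4) | ≤ C/(ν + k). -/

import Mathlib

open Real MeasureTheory Set

/-- The Bessel function of the first kind of order `ν ≥ 0`, for `x > 0`, via the
integral representation. -/
noncomputable def besselJ (ν x : ℝ) : ℝ :=
  (1 / π) * (∫ θ in (0:ℝ)..π, Real.cos (x * Real.sin θ - ν * θ)) -
    (Real.sin (ν * π) / π) * ∫ t in Set.Ioi (0:ℝ), Real.exp (-x * Real.sinh t - ν * t)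

/-- The function `g(t) = (√(1-t²) - t arccos t)/π`. -/
noncomputable def gfun (t : ℝ) : ℝ := (Real.sqrt (1 - t ^ 2) - t * Real.arccos t) / π

/-- `j` is the `k`-th positive zero of `J_ν`: `j > 0`, `J_ν(j) = 0`, and there are exactly
`k - 1` zeros of `J_ν` in `(0, j)`. -/
def IsKthZero (ν : ℝ) (k : ℕ) (j : ℝ) : Prop :=
  0 < j ∧ besselJ ν j = 0 ∧ {x : ℝ | 0 < x ∧ x < j ∧ besselJ ν x = 0}.ncard = k - 1

/-!
The function `y t = J_ν (exp t)` solves `y'' + (exp (2 t) - ν²) y = 0`, whose Liouville–Green phase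
beyond the turning point `t = log ν` is the Debye phase `φ`, and `x g(ν/x) = φ / π`. Relative to
`φ`, two modifications of the Prüfer angle of `y`, both built from `r = (√q)' / (2 q)` with
`q = exp (2 t) - ν²`, are monotone in opposite directions. Hence between consecutive zeros `a < b`
the phase grows by at most `π` and at least `π + r b - r a`. Stationary phase gives `J_ν` its cosine
asymptotics at infinity, which fix the additive constant, so that the `k`-th zero `j` satisfies
`(k - 1/4) π ≤ φ ≤ (k - 1/4) π + r`. For `j ≥ (1 + c) ν` the correction `r` is `O(1 / j)`.
-/

open Filter Topology

/-! ### The argument of a complex number in the closed upper half plane -/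

lemma hasDerivAt_arg_of_im_pos {u v : ℝ → ℝ} {u' v' t : ℝ} (hu : HasDerivAt u u' t)
    (hv : HasDerivAt v v' t) (hpos : 0 < v t) :
    HasDerivAt (fun s => Complex.arg ⟨u s, v s⟩)
      ((u t * v' - v t * u') / (u t ^ 2 + v t ^ 2)) t := by
  have hz : HasDerivAt (fun s => (⟨u s, v s⟩ : ℂ)) ⟨u', v'⟩ t := by
    simp only [Complex.mk_eq_add_mul_I]
    exact hu.ofReal_comp.add (hv.ofReal_comp.mul_const Complex.I)
  have hlog := hz.clog_real (Or.inr hpos.ne')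
  have him := Complex.imCLM.hasFDerivAt.comp_hasDerivAt t hlog
  simp only [Function.comp_def, Complex.imCLM_apply, Complex.log_im, Complex.div_im,
    Complex.normSq_mk] at him
  exact him.congr_deriv (by ring)

lemma continuousOn_arg_im_nonneg : ContinuousOn Complex.arg {z | z ≠ 0 ∧ 0 ≤ z.im} := by
  rintro z ⟨hz, -⟩
  by_cases hslit : z ∈ Complex.slitPlane
  · exact (Complex.continuousAt_arg hslit).continuousWithinAt
  · obtain ⟨hre, him⟩ : z.re ≤ 0 ∧ z.im = 0 := by
      simpa only [Complex.mem_slitPlane_iff, not_or, not_lt, not_not] using hslit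
    have hre' : z.re < 0 := hre.lt_of_ne fun h => hz (Complex.ext h him)
    exact (Complex.continuousWithinAt_arg_of_re_neg_of_im_zero hre' him).mono fun w hw => hw.2

lemma continuousOn_arg_mk {u v : ℝ → ℝ} {s : Set ℝ} (hu : ContinuousOn u s)
    (hv : ContinuousOn v s) (hpos : ∀ t ∈ s, 0 ≤ v t) (hne : ∀ t ∈ s, v t = 0 → u t ≠ 0) :
    ContinuousOn (fun t => Complex.arg ⟨u t, v t⟩) s := by
  refine continuousOn_arg_im_nonneg.comp (f := fun t => (⟨u t, v t⟩ : ℂ)) ?_ fun t ht =>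
    ⟨fun h => hne t ht congr(($h).im) congr(($h).re), hpos t ht⟩
  simp only [Complex.mk_eq_add_mul_I]
  fun_prop

/-! ### Zeros of solutions of `y'' + q y = 0` -/

/-- `y` is a solution on the whole line of the equation `y'' + q y = 0`, with derivative `y'`. -/
structure LinearODESol (q y y' : ℝ → ℝ) : Prop where
  hasDerivAt : ∀ t, HasDerivAt y (y' t) t
  hasDerivAt_deriv : ∀ t, HasDerivAt y' (-q t * y t) t

lemma pos_or_neg_of_continuous_of_ne_zero {y : ℝ → ℝ} (hy : Continuous y) {s : Set ℝ}
    (hs : s.OrdConnected) (hne : ∀ t ∈ s, y t ≠ 0) :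
    (∀ t ∈ s, 0 < y t) ∨ ∀ t ∈ s, y t < 0 := by
  by_contra! hsign
  obtain ⟨⟨t₁, ht₁, hy₁⟩, t₂, ht₂, hy₂⟩ := hsign
  obtain ⟨t, ht, h0⟩ :=
    intermediate_value_uIcc hy.continuousOn (mem_uIcc.2 (Or.inl ⟨hy₁, hy₂⟩))
  exact hne t (hs.uIcc_subset ht₁ ht₂ ht) h0

namespace LinearODESol

variable {q y y' : ℝ → ℝ} {a b : ℝ}

lemma neg (h : LinearODESol q y y') : LinearODESol q (-y) (-y') where
  hasDerivAt t := (h.hasDerivAt t).neg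
  hasDerivAt_deriv t := (h.hasDerivAt_deriv t).neg.congr_deriv (by simp)

lemma continuous (h : LinearODESol q y y') : Continuous y :=
  continuous_iff_continuousAt.2 fun t => (h.hasDerivAt t).continuousAt

lemma continuous_deriv (h : LinearODESol q y y') : Continuous y' :=
  continuous_iff_continuousAt.2 fun t => (h.hasDerivAt_deriv t).continuousAt

lemma eq_zero (h : LinearODESol q y y') (hq : Continuous q) (ha : y a = 0) (ha' : y' a = 0) :
    y = 0 := by
  ext t
  set R : ℝ := max |a| |t| + 1
  have haR : a ∈ Ioo (-R) R := abs_lt.1 ((le_max_left _ _).trans_lt (lt_add_one _))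
  have htR : t ∈ Icc (-R) R := abs_le.1 ((le_max_right _ _).trans (lt_add_one _).le)
  obtain ⟨K, hK⟩ := isCompact_Icc.exists_bound_of_continuousOn (hq.continuousOn (s := Icc (-R) R))
  have hlip : ∀ s ∈ Ioo (-R) R,
      LipschitzOnWith (max (1 * 1) (K.toNNReal * 1)) (fun z : ℝ × ℝ => (z.2, -q s * z.1)) univ := by
    intro s hs
    have hmul : LipschitzWith K.toNNReal (fun x : ℝ => -q s * x) :=
      LipschitzWith.of_dist_le_mul fun x z => by
        rw [Real.dist_eq, Real.dist_eq, ← mul_sub, abs_mul, abs_neg]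
        gcongr
        exact (hK s (Ioo_subset_Icc_self hs)).trans (Real.le_coe_toNNReal K)
    exact ((LipschitzWith.id.comp LipschitzWith.prod_snd).prodMk
      (hmul.comp LipschitzWith.prod_fst)).lipschitzOnWith
  have heq := ODE_solution_unique_of_mem_Icc (f := fun s => (y s, y' s)) (g := fun _ => 0) hlip haR
    (h.continuous.prodMk h.continuous_deriv).continuousOn
    (fun s _ => (h.hasDerivAt s).prodMk (h.hasDerivAt_deriv s)) (fun _ _ => mem_univ _)
    continuousOn_const (fun s _ => (hasDerivAt_const s (0 : ℝ × ℝ)).congr_deriv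
      (Prod.ext rfl (mul_zero _).symm))
    (fun _ _ => mem_univ _) (Prod.ext ha ha')
  exact congr(($(heq htR)).1)

lemma deriv_ne_zero (h : LinearODESol q y y') (hq : Continuous q) (hy : y ≠ 0) (ha : y a = 0) :
    y' a ≠ 0 :=
  fun ha' => hy (h.eq_zero hq ha ha')

lemma finite_zeros_Icc (h : LinearODESol q y y') (hq : Continuous q) (hy : y ≠ 0) (a b : ℝ) :
    {t ∈ Icc a b | y t = 0}.Finite := by
  by_contra hinf
  obtain ⟨z, -, hz⟩ :=
    Set.Infinite.exists_accPt_of_subset_isCompact hinf isCompact_Icc (sep_subset _ _)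
  rw [accPt_iff_frequently_nhdsNE] at hz
  replace hz : ∃ᶠ t in 𝓝[≠] z, y t = 0 := hz.mono fun t ht => ht.2
  have hyz : y z = 0 := by
    by_contra hne
    exact hz (((h.continuous.tendsto z).mono_left nhdsWithin_le_nhds).eventually_ne hne)
  exact hz ((h.hasDerivAt z).eventually_ne (h.deriv_ne_zero hq hy hyz))

lemma nonneg_of_pos_Ioo (h : LinearODESol q y y') (hab : a < b)
    (hpos : ∀ t ∈ Ioo a b, 0 < y t) : ∀ t ∈ Icc a b, 0 ≤ y t := by
  rw [← closure_Ioo hab.ne]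
  exact fun t ht => le_on_closure (fun s hs => (hpos s hs).le) continuousOn_const
    h.continuous.continuousOn ht

lemma deriv_nonneg_of_pos_right (h : LinearODESol q y y') (hab : a < b)
    (hpos : ∀ t ∈ Ioo a b, 0 < y t) (ha : y a = 0) : 0 ≤ y' a := by
  refine ge_of_tendsto ((h.hasDerivAt a).tendsto_slope.mono_left (nhdsGT_le_nhdsNE a)) ?_
  filter_upwards [Ioo_mem_nhdsGT hab] with t ht
  rw [slope_def_field, ha, sub_zero]
  exact (div_pos (hpos t ht) (sub_pos.2 ht.1)).le

lemma deriv_nonpos_of_pos_left (h : LinearODESol q y y') (hab : a < b)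
    (hpos : ∀ t ∈ Ioo a b, 0 < y t) (hb : y b = 0) : y' b ≤ 0 := by
  refine le_of_tendsto ((h.hasDerivAt b).tendsto_slope.mono_left (nhdsLT_le_nhdsNE b)) ?_
  filter_upwards [Ioo_mem_nhdsLT hab] with t ht
  rw [slope_def_field, hb, sub_zero]
  exact (div_neg_of_pos_of_neg (hpos t ht) (sub_neg.2 ht.2)).le

lemma mul_deriv_strictMonoOn (h : LinearODESol q y y') (hq : Continuous q) (hy : y ≠ 0) {τ : ℝ}
    (hneg : ∀ t < τ, q t < 0) : StrictMonoOn (y * y') (Iic τ) := by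
  have hderiv : ∀ t, HasDerivAt (y * y') (y' t ^ 2 + -q t * y t ^ 2) t := fun t =>
    ((h.hasDerivAt t).mul (h.hasDerivAt_deriv t)).congr_deriv (by ring)
  refine strictMonoOn_of_deriv_pos (convex_Iic τ)
    (h.continuous.mul h.continuous_deriv).continuousOn fun t ht => ?_
  rw [interior_Iic] at ht
  rw [(hderiv t).deriv]
  have hqt : 0 < -q t := neg_pos.2 (hneg t ht)
  by_cases h0 : y t = 0
  · have := h.deriv_ne_zero hq hy h0
    positivity
  · positivity

/-- If `y y'` were negative at `t`, it would be so on `(-∞, t]`, and `y²` would grow at least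
linearly towards `-∞`. -/
lemma mul_deriv_nonneg_of_bounded (h : LinearODESol q y y') {τ M : ℝ}
    (hmono : MonotoneOn (y * y') (Iic τ)) (hM : ∀ t, |y t| ≤ M) {t : ℝ} (ht : t ≤ τ) :
    0 ≤ y t * y' t := by
  by_contra! hc
  set c := y t * y' t
  have hderiv : ∀ s, HasDerivAt (fun s => y s ^ 2 - 2 * c * s) (2 * (y s * y' s) - 2 * c) s :=
    fun s => (((h.hasDerivAt s).fun_pow 2).fun_sub
      ((hasDerivAt_id s).const_mul (2 * c))).congr_deriv (by push_cast; ring)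
  have hanti : AntitoneOn (fun s => y s ^ 2 - 2 * c * s) (Iic t) := by
    refine antitoneOn_of_deriv_nonpos (convex_Iic t)
      (fun s _ => (hderiv s).continuousAt.continuousWithinAt)
      (fun s _ => (hderiv s).differentiableAt.differentiableWithinAt) fun s hs => ?_
    rw [interior_Iic] at hs
    rw [(hderiv s).deriv]
    have : y s * y' s ≤ c := hmono (mem_Iic.2 (hs.le.trans ht)) ht hs.le
    linarith
  obtain ⟨s, hst, hs⟩ : ∃ s ≤ t, 2 * c * s = 2 * c * t + (M ^ 2 + 1) := by
    refine ⟨t + (M ^ 2 + 1) / (2 * c), ?_, by rw [mul_add, mul_div_cancel₀ _ (by linarith)]⟩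
    have : (M ^ 2 + 1) / (2 * c) ≤ 0 :=
      div_nonpos_of_nonneg_of_nonpos (by positivity) (by linarith)
    linarith
  have hgrow : y t ^ 2 - 2 * c * t ≤ y s ^ 2 - 2 * c * s := hanti hst self_mem_Iic hst
  have hbound : y s ^ 2 ≤ M ^ 2 := sq_le_sq' (abs_le.1 (hM s)).1 (abs_le.1 (hM s)).2
  linarith [sq_nonneg (y t)]

lemma mul_deriv_pos_of_bounded (h : LinearODESol q y y') (hq : Continuous q) (hy : y ≠ 0) {τ M : ℝ}
    (hneg : ∀ t < τ, q t < 0) (hM : ∀ t, |y t| ≤ M) {t : ℝ} (ht : t ≤ τ) : 0 < y t * y' t := by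
  have hmono := h.mul_deriv_strictMonoOn hq hy hneg
  have hpred : t - 1 ≤ τ := by linarith
  exact (h.mul_deriv_nonneg_of_bounded hmono.monotoneOn hM hpred).trans_lt
    (hmono hpred ht (sub_one_lt t))

end LinearODESol

/-! ### Liouville–Green phase and Prüfer angles beyond a turning point -/

/-- Data for the Liouville–Green (WKB) approximation of `y'' + q y = 0` beyond a simple turning
point `τ`, where `q` changes sign from negative to positive. The phase `φ` satisfies `φ' = √q`,
`φ(τ⁺) = 0`, and `r = (√q)' / (2 q)` is the first-order correction, which is assumed to satisfy the
differential inequality `r' + √q r² ≤ 0`. -/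
structure TurningPointPhase (q : ℝ → ℝ) (τ : ℝ) (φ r : ℝ → ℝ) : Prop where
  continuous : Continuous q
  neg_of_lt : ∀ t < τ, q t < 0
  pos_of_gt : ∀ t > τ, 0 < q t
  hasDerivAt_phase : ∀ t > τ, HasDerivAt φ √(q t) t
  hasDerivAt_sqrt : ∀ t > τ, HasDerivAt (fun s => √(q s)) (2 * r t * √(q t) ^ 2) t
  tendsto_phase : Tendsto φ (𝓝[>] τ) (𝓝 0)
  corr_nonneg : ∀ t > τ, 0 ≤ r t
  differentiableAt_corr : ∀ t > τ, DifferentiableAt ℝ r t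
  deriv_corr_le : ∀ t > τ, deriv r t + √(q t) * r t ^ 2 ≤ 0

/-- The Prüfer angle of `(y', √q y)` relative to the phase `φ`, corrected by a bounded multiple of
`r` so as to be nonincreasing. -/
noncomputable def antitonePrufer (q φ r y y' : ℝ → ℝ) (t : ℝ) : ℝ :=
  Complex.arg ⟨y' t, √(q t) * y t⟩ - φ t + r t * (y' t ^ 2 / (y' t ^ 2 + (√(q t) * y t) ^ 2))

/-- The Prüfer angle of `(y' + r √q y, √q y)` relative to the phase `φ`; the shear by `r` makes it
nondecreasing. -/
noncomputable def monotonePrufer (q φ r y y' : ℝ → ℝ) (t : ℝ) : ℝ :=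
  Complex.arg ⟨y' t + r t * (√(q t) * y t), √(q t) * y t⟩ - φ t

namespace TurningPointPhase

variable {q φ r y y' : ℝ → ℝ} {τ a b M : ℝ}

lemma sqrt_pos (P : TurningPointPhase q τ φ r) {t : ℝ} (ht : τ < t) : 0 < √(q t) :=
  Real.sqrt_pos.2 (P.pos_of_gt t ht)

lemma hasDerivAt_sqrt_mul (P : TurningPointPhase q τ φ r) (h : LinearODESol q y y') {t : ℝ}
    (ht : τ < t) : HasDerivAt (fun s => √(q s) * y s)
      (√(q t) * y' t + 2 * r t * √(q t) * (√(q t) * y t)) t :=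
  ((P.hasDerivAt_sqrt t ht).mul (h.hasDerivAt t)).congr_deriv (by ring)

lemma hasDerivAt_deriv (P : TurningPointPhase q τ φ r) (h : LinearODESol q y y') {t : ℝ}
    (ht : τ < t) : HasDerivAt y' (-√(q t) * (√(q t) * y t)) t :=
  (h.hasDerivAt_deriv t).congr_deriv (by
    linear_combination y t * Real.mul_self_sqrt (P.pos_of_gt t ht).le)

lemma hasDerivAt_antitonePrufer (P : TurningPointPhase q τ φ r) (h : LinearODESol q y y') {t : ℝ}
    (ht : τ < t) (hy : 0 < y t) : HasDerivAt (antitonePrufer q φ r y y')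
      (deriv r t * (y' t ^ 2 / (y' t ^ 2 + (√(q t) * y t) ^ 2)) -
        √(q t) * (2 * r t * y' t * (√(q t) * y t) / (y' t ^ 2 + (√(q t) * y t) ^ 2)) ^ 2) t := by
  have hp := P.sqrt_pos ht
  have hV := P.hasDerivAt_sqrt_mul h ht
  have hU := P.hasDerivAt_deriv h ht
  have hVpos : 0 < √(q t) * y t := mul_pos hp hy
  have hne : y' t ^ 2 + (√(q t) * y t) ^ 2 ≠ 0 := by positivity
  refine (((hasDerivAt_arg_of_im_pos hU hV hVpos).fun_sub (P.hasDerivAt_phase t ht)).fun_add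
    ((P.differentiableAt_corr t ht).hasDerivAt.fun_mul
      ((hU.fun_pow 2).fun_div ((hU.fun_pow 2).fun_add (hV.fun_pow 2)) hne))).congr_deriv ?_
  generalize √(q t) * y t = V at *
  field_simp
  push_cast
  ring

lemma hasDerivAt_monotonePrufer (P : TurningPointPhase q τ φ r) (h : LinearODESol q y y') {t : ℝ}
    (ht : τ < t) (hy : 0 < y t) : HasDerivAt (monotonePrufer q φ r y y')
      (-(deriv r t + √(q t) * r t ^ 2) * ((√(q t) * y t) ^ 2 /
        ((y' t + r t * (√(q t) * y t)) ^ 2 + (√(q t) * y t) ^ 2))) t := by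
  have hp := P.sqrt_pos ht
  have hV := P.hasDerivAt_sqrt_mul h ht
  have hW := (P.hasDerivAt_deriv h ht).fun_add
    ((P.differentiableAt_corr t ht).hasDerivAt.fun_mul hV)
  have hVpos : 0 < √(q t) * y t := mul_pos hp hy
  refine ((hasDerivAt_arg_of_im_pos hW hV hVpos).fun_sub
    (P.hasDerivAt_phase t ht)).congr_deriv ?_
  generalize √(q t) * y t = V at *
  have hne : (y' t + r t * V) ^ 2 + V ^ 2 ≠ 0 := by positivity
  field_simp
  ring

lemma deriv_ne_zero_of_sqrt_mul_eq_zero (P : TurningPointPhase q τ φ r)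
    (h : LinearODESol q y y') (hy : y ≠ 0) {t : ℝ} (ht : τ < t) (hV : √(q t) * y t = 0) :
    y' t ≠ 0 :=
  h.deriv_ne_zero P.continuous hy ((mul_eq_zero.1 hV).resolve_left (P.sqrt_pos ht).ne')

lemma continuousOn_phase (P : TurningPointPhase q τ φ r) : ContinuousOn φ (Ioi τ) :=
  HasDerivAt.continuousOn P.hasDerivAt_phase

lemma continuousOn_corr (P : TurningPointPhase q τ φ r) : ContinuousOn r (Ioi τ) :=
  fun t ht => (P.differentiableAt_corr t ht).continuousAt.continuousWithinAt

lemma continuousOn_arg_prufer (P : TurningPointPhase q τ φ r) (h : LinearODESol q y y')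
    (hy : y ≠ 0) {s : Set ℝ} (hs : s ⊆ Ioi τ) (hnonneg : ∀ t ∈ s, 0 ≤ y t) {σ : ℝ → ℝ}
    (hσ : ContinuousOn σ s) : ContinuousOn
      (fun t => Complex.arg ⟨y' t + σ t * (√(q t) * y t), √(q t) * y t⟩) s := by
  have hyc := h.continuous
  have hyc' := h.continuous_deriv
  have hpc := P.continuous.sqrt
  refine continuousOn_arg_mk (by fun_prop) (by fun_prop)
    (fun t ht => mul_nonneg (Real.sqrt_nonneg _) (hnonneg t ht)) fun t ht hV => ?_
  simpa only [hV, mul_zero, add_zero] using P.deriv_ne_zero_of_sqrt_mul_eq_zero h hy (hs ht) hV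

lemma continuousOn_antitonePrufer (P : TurningPointPhase q τ φ r) (h : LinearODESol q y y')
    (hy : y ≠ 0) {s : Set ℝ} (hs : s ⊆ Ioi τ) (hnonneg : ∀ t ∈ s, 0 ≤ y t) :
    ContinuousOn (antitonePrufer q φ r y y') s := by
  have hyc := h.continuous
  have hyc' := h.continuous_deriv
  have hpc := P.continuous.sqrt
  have harg := P.continuousOn_arg_prufer h hy hs hnonneg (continuousOn_const (c := 0))
  simp only [zero_mul, add_zero] at harg
  refine (harg.sub (P.continuousOn_phase.mono hs)).add ((P.continuousOn_corr.mono hs).mul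
    (ContinuousOn.div (by fun_prop) (by fun_prop) fun t ht => ?_))
  by_cases hV : √(q t) * y t = 0
  · have := P.deriv_ne_zero_of_sqrt_mul_eq_zero h hy (hs ht) hV
    positivity
  · positivity

lemma antitoneOn_antitonePrufer (P : TurningPointPhase q τ φ r) (h : LinearODESol q y y')
    (hy : y ≠ 0) (ha : τ < a) (hab : a < b) (hpos : ∀ t ∈ Ioo a b, 0 < y t) :
    AntitoneOn (antitonePrufer q φ r y y') (Icc a b) := by
  have hderiv : ∀ t ∈ interior (Icc a b), HasDerivAt (antitonePrufer q φ r y y') _ t :=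
    fun t ht => P.hasDerivAt_antitonePrufer h
      (ha.trans (interior_Icc.subset ht).1) (hpos t (interior_Icc.subset ht))
  refine antitoneOn_of_deriv_nonpos (convex_Icc a b)
    (P.continuousOn_antitonePrufer h hy (fun t ht => ha.trans_le ht.1)
      (h.nonneg_of_pos_Ioo hab hpos))
    (fun t ht => (hderiv t ht).differentiableAt.differentiableWithinAt) fun t ht => ?_
  rw [(hderiv t ht).deriv]
  have hτ : τ < t := ha.trans (interior_Icc.subset ht).1
  have hr' : deriv r t ≤ 0 := by
    linarith [P.deriv_corr_le t hτ, mul_nonneg (P.sqrt_pos hτ).le (sq_nonneg (r t))]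
  have hcorr := mul_nonpos_of_nonpos_of_nonneg hr'
    (show 0 ≤ y' t ^ 2 / (y' t ^ 2 + (√(q t) * y t) ^ 2) by positivity)
  exact (sub_le_self _ (by positivity)).trans hcorr

lemma monotoneOn_monotonePrufer (P : TurningPointPhase q τ φ r) (h : LinearODESol q y y')
    (hy : y ≠ 0) (ha : τ < a) (hab : a < b) (hpos : ∀ t ∈ Ioo a b, 0 < y t) :
    MonotoneOn (monotonePrufer q φ r y y') (Icc a b) := by
  have hsub : Icc a b ⊆ Ioi τ := fun t ht => ha.trans_le ht.1
  have hderiv : ∀ t ∈ interior (Icc a b), HasDerivAt (monotonePrufer q φ r y y') _ t :=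
    fun t ht => P.hasDerivAt_monotonePrufer h
      (hsub (interior_subset ht)) (hpos t (interior_Icc.subset ht))
  refine monotoneOn_of_deriv_nonneg (convex_Icc a b)
    ((P.continuousOn_arg_prufer h hy hsub (h.nonneg_of_pos_Ioo hab hpos)
      (P.continuousOn_corr.mono hsub)).sub (P.continuousOn_phase.mono hsub))
    (fun t ht => (hderiv t ht).differentiableAt.differentiableWithinAt) fun t ht => ?_
  rw [(hderiv t ht).deriv]
  exact mul_nonneg (neg_nonneg.2 (P.deriv_corr_le t (hsub (interior_subset ht)))) (by positivity)

lemma antitonePrufer_of_zero_of_deriv_pos (ha : y a = 0) (ha' : 0 < y' a) :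
    antitonePrufer q φ r y y' a = r a - φ a := by
  have harg : Complex.arg ⟨y' a, 0⟩ = 0 := Complex.arg_ofReal_of_nonneg ha'.le
  have hone : y' a ^ 2 / (y' a ^ 2 + 0) = 1 := by rw [add_zero, div_self (by positivity)]
  rw [antitonePrufer, ha, mul_zero, harg, zero_pow two_ne_zero, hone]
  ring

lemma antitonePrufer_of_zero_of_deriv_neg (hb : y b = 0) (hb' : y' b < 0) :
    antitonePrufer q φ r y y' b = π + r b - φ b := by
  have harg : Complex.arg ⟨y' b, 0⟩ = π := Complex.arg_ofReal_of_neg hb'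
  have hone : y' b ^ 2 / (y' b ^ 2 + 0) = 1 := by
    rw [add_zero, div_self (pow_ne_zero 2 hb'.ne)]
  rw [antitonePrufer, hb, mul_zero, harg, zero_pow two_ne_zero, hone]
  ring

lemma monotonePrufer_of_zero_of_deriv_pos (ha : y a = 0) (ha' : 0 < y' a) :
    monotonePrufer q φ r y y' a = -φ a := by
  have harg : Complex.arg ⟨y' a, 0⟩ = 0 := Complex.arg_ofReal_of_nonneg ha'.le
  simp [monotonePrufer, ha, harg]

lemma monotonePrufer_of_zero_of_deriv_neg (hb : y b = 0) (hb' : y' b < 0) :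
    monotonePrufer q φ r y y' b = π - φ b := by
  have harg : Complex.arg ⟨y' b, 0⟩ = π := Complex.arg_ofReal_of_neg hb'
  simp [monotonePrufer, hb, harg]

lemma phase_gap_of_pos (P : TurningPointPhase q τ φ r) (h : LinearODESol q y y') (hy : y ≠ 0)
    (hτ : τ < a) (hab : a < b) (ha : y a = 0) (hb : y b = 0) (hpos : ∀ t ∈ Ioo a b, 0 < y t) :
    π + r b - r a ≤ φ b - φ a ∧ φ b - φ a ≤ π := by
  have ha' : 0 < y' a :=
    (h.deriv_nonneg_of_pos_right hab hpos ha).lt_of_ne' (h.deriv_ne_zero P.continuous hy ha)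
  have hb' : y' b < 0 :=
    (h.deriv_nonpos_of_pos_left hab hpos hb).lt_of_ne (h.deriv_ne_zero P.continuous hy hb)
  have hanti := P.antitoneOn_antitonePrufer h hy hτ hab hpos
    (left_mem_Icc.2 hab.le) (right_mem_Icc.2 hab.le) hab.le
  have hmono := P.monotoneOn_monotonePrufer h hy hτ hab hpos
    (left_mem_Icc.2 hab.le) (right_mem_Icc.2 hab.le) hab.le
  rw [antitonePrufer_of_zero_of_deriv_pos ha ha',
    antitonePrufer_of_zero_of_deriv_neg hb hb'] at hanti
  rw [monotonePrufer_of_zero_of_deriv_pos ha ha',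
    monotonePrufer_of_zero_of_deriv_neg hb hb'] at hmono
  constructor <;> linarith

lemma phase_gap (P : TurningPointPhase q τ φ r) (h : LinearODESol q y y') (hy : y ≠ 0)
    (hτ : τ < a) (hab : a < b) (ha : y a = 0) (hb : y b = 0) (hne : ∀ t ∈ Ioo a b, y t ≠ 0) :
    π + r b - r a ≤ φ b - φ a ∧ φ b - φ a ≤ π := by
  rcases pos_or_neg_of_continuous_of_ne_zero h.continuous ordConnected_Ioo hne with hpos | hneg
  · exact P.phase_gap_of_pos h hy hτ hab ha hb hpos
  · exact P.phase_gap_of_pos h.neg (neg_ne_zero.2 hy) hτ hab (by simpa) (by simpa)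
      fun t ht => neg_pos.2 (hneg t ht)

lemma phase_nonneg (P : TurningPointPhase q τ φ r) {t : ℝ} (ht : τ < t) : 0 ≤ φ t := by
  have hmono : MonotoneOn φ (Ioi τ) := by
    refine monotoneOn_of_deriv_nonneg (convex_Ioi τ) P.continuousOn_phase
      (fun s hs => (P.hasDerivAt_phase s ?_).differentiableAt.differentiableWithinAt)
      fun s hs => ?_
    · exact interior_subset hs
    · rw [(P.hasDerivAt_phase s (interior_subset hs)).deriv]
      exact Real.sqrt_nonneg _
  refine le_of_tendsto P.tendsto_phase ?_
  filter_upwards [Ioo_mem_nhdsGT ht] with s hs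
  exact hmono hs.1 ht hs.2.le

lemma phase_first_zero_le (P : TurningPointPhase q τ φ r) (h : LinearODESol q y y') (hy : y ≠ 0)
    (hτ : τ < b) (hb : y b = 0) (hpos : ∀ t ∈ Ioo τ b, 0 < y t) : φ b ≤ π := by
  have hb' : y' b < 0 :=
    (h.deriv_nonpos_of_pos_left hτ hpos hb).lt_of_ne (h.deriv_ne_zero P.continuous hy hb)
  suffices h0 : ∀ s ∈ Ioo τ b, φ b - π ≤ φ s from
    sub_nonpos.1 (ge_of_tendsto P.tendsto_phase (by
      filter_upwards [Ioo_mem_nhdsGT hτ] with s hs using h0 s hs))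
  intro s hs
  have hmono := P.monotoneOn_monotonePrufer h hy hs.1 hs.2
    (fun t ht => hpos t ⟨hs.1.trans ht.1, ht.2⟩)
    (left_mem_Icc.2 hs.2.le) (right_mem_Icc.2 hs.2.le) hs.2.le
  rw [monotonePrufer_of_zero_of_deriv_neg hb hb', monotonePrufer] at hmono
  have harg : 0 ≤ Complex.arg ⟨y' s + r s * (√(q s) * y s), √(q s) * y s⟩ :=
    Complex.arg_nonneg_iff.2 (mul_nonneg (Real.sqrt_nonneg _) (hpos s hs).le)
  linarith

lemma le_phase_first_zero (P : TurningPointPhase q τ φ r) (h : LinearODESol q y y') (hy : y ≠ 0)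
    (hτ : τ < b) (hτ' : 0 < y' τ) (hb : y b = 0) (hpos : ∀ t ∈ Ioo τ b, 0 < y t) :
    π / 2 + r b ≤ φ b := by
  have hb' : y' b < 0 :=
    (h.deriv_nonpos_of_pos_left hτ hpos hb).lt_of_ne (h.deriv_ne_zero P.continuous hy hb)
  obtain ⟨s, hs, hs'⟩ : ∃ s ∈ Ioo τ b, y' s = 0 :=
    intermediate_value_Ioo' hτ.le h.continuous_deriv.continuousOn ⟨hb', hτ'⟩
  have hanti := P.antitoneOn_antitonePrufer h hy hs.1 hs.2
    (fun t ht => hpos t ⟨hs.1.trans ht.1, ht.2⟩)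
    (left_mem_Icc.2 hs.2.le) (right_mem_Icc.2 hs.2.le) hs.2.le
  have harg : Complex.arg ⟨0, √(q s) * y s⟩ = π / 2 :=
    Complex.arg_eq_pi_div_two_iff.2 ⟨rfl, mul_pos (P.sqrt_pos hs.1) (hpos s hs)⟩
  rw [antitonePrufer_of_zero_of_deriv_neg hb hb', antitonePrufer, hs', harg] at hanti
  rw [zero_pow two_ne_zero, zero_div, mul_zero, add_zero] at hanti
  linarith [P.phase_nonneg hs.1]

lemma ne_zero_of_le (P : TurningPointPhase q τ φ r) (h : LinearODESol q y y') (hy : y ≠ 0)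
    (hM : ∀ t, |y t| ≤ M) {t : ℝ} (ht : t ≤ τ) : y t ≠ 0 :=
  left_ne_zero_of_mul (h.mul_deriv_pos_of_bounded P.continuous hy P.neg_of_lt hM ht).ne'

lemma gt_of_zero (P : TurningPointPhase q τ φ r) (h : LinearODESol q y y') (hy : y ≠ 0)
    (hM : ∀ t, |y t| ≤ M) {t : ℝ} (ht : y t = 0) : τ < t :=
  not_le.1 fun hle => P.ne_zero_of_le h hy hM hle ht

lemma phase_first_zero_of_pos (P : TurningPointPhase q τ φ r) (h : LinearODESol q y y')
    (hy : y ≠ 0) (hM : ∀ t, |y t| ≤ M) (hb : y b = 0) (hpos : ∀ t < b, 0 < y t) :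
    π / 2 + r b ≤ φ b ∧ φ b ≤ π := by
  have hτ := P.gt_of_zero h hy hM hb
  have hτ' : 0 < y' τ := (pos_iff_pos_of_mul_pos
    (h.mul_deriv_pos_of_bounded P.continuous hy P.neg_of_lt hM le_rfl)).1 (hpos τ hτ)
  exact ⟨P.le_phase_first_zero h hy hτ hτ' hb fun t ht => hpos t ht.2,
    P.phase_first_zero_le h hy hτ hb fun t ht => hpos t ht.2⟩

lemma phase_first_zero (P : TurningPointPhase q τ φ r) (h : LinearODESol q y y') (hy : y ≠ 0)
    (hM : ∀ t, |y t| ≤ M) (hb : y b = 0) (hne : ∀ t < b, y t ≠ 0) :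
    π / 2 + r b ≤ φ b ∧ φ b ≤ π := by
  rcases pos_or_neg_of_continuous_of_ne_zero h.continuous (ordConnected_Iio (a := b)) hne with
    hpos | hneg
  · exact P.phase_first_zero_of_pos h hy hM hb hpos
  · exact P.phase_first_zero_of_pos h.neg (neg_ne_zero.2 hy) (by simpa using hM) (by simpa)
      fun t ht => neg_pos.2 (hneg t ht)

end TurningPointPhase

/-! ### Counting zeros -/

lemma exists_consecutive {S : Set ℝ} (hfin : ∀ b, (S ∩ Iio b).Finite) {b : ℝ}
    (hne : (S ∩ Iio b).Nonempty) :
    ∃ a ∈ S, a < b ∧ (∀ t ∈ Ioo a b, t ∉ S) ∧ (S ∩ Iio b).ncard = (S ∩ Iio a).ncard + 1 := by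
  obtain ⟨a, ⟨haS, hab⟩, hmax⟩ := (hfin b).exists_maximal hne
  have hgap : ∀ t ∈ Ioo a b, t ∉ S := fun t ht htS => ht.1.not_ge (hmax ⟨htS, ht.2⟩ ht.1.le)
  have hinsert : S ∩ Iio b = insert a (S ∩ Iio a) := by
    ext t
    constructor
    · rintro ⟨htS, htb⟩
      rcases lt_trichotomy t a with hlt | heq | hgt
      exacts [Or.inr ⟨htS, hlt⟩, Or.inl heq, absurd htS (hgap t ⟨hgt, htb⟩)]
    · rintro (rfl | ⟨htS, hta⟩)
      exacts [⟨haS, hab⟩, ⟨htS, Iio_subset_Iio (le_of_lt hab) hta⟩]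
  exact ⟨a, haS, hab, hgap, by rw [hinsert, ncard_insert_of_notMem (by simp) (hfin a)]⟩

lemma exists_first_le {S : Set ℝ} (hfin : ∀ b, (S ∩ Iio b).Finite) {b : ℝ}
    (hb : b ∈ S) : ∃ a ∈ S, a ≤ b ∧ S ∩ Iio a = ∅ := by
  rcases (S ∩ Iio b).eq_empty_or_nonempty with hempty | hne
  · exact ⟨b, hb, le_rfl, hempty⟩
  · obtain ⟨a, ⟨haS, hab⟩, hmin⟩ := (hfin b).exists_minimal hne
    refine ⟨a, haS, le_of_lt hab, eq_empty_of_forall_notMem fun t ⟨htS, hta⟩ => ?_⟩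
    exact (mem_Iio.1 hta).not_ge (hmin ⟨htS, Iio_subset_Iio (le_of_lt hab) hta⟩ (le_of_lt hta))

lemma le_add_ncard_sub_mul_of_consecutive {S : Set ℝ} (hfin : ∀ b, (S ∩ Iio b).Finite)
    {u : ℝ → ℝ} {c : ℝ}
    (hstep : ∀ a ∈ S, ∀ b ∈ S, a < b → (∀ t ∈ Ioo a b, t ∉ S) → u b ≤ u a + c)
    {a b : ℝ} (ha : a ∈ S) (hb : b ∈ S) (hab : a ≤ b) :
    u b ≤ u a + ((S ∩ Iio b).ncard - (S ∩ Iio a).ncard) * c := by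
  induction hn : (S ∩ Iio b).ncard generalizing b with
  | zero =>
    obtain rfl : a = b := hab.eq_of_not_lt fun hlt =>
      ((ncard_eq_zero (hfin b)).1 hn).subset ⟨ha, hlt⟩
    simp [hn]
  | succ n ih =>
    rcases hab.eq_or_lt with rfl | hlt
    · simp [hn]
    obtain ⟨d, hd, hdb, hgap, hcard⟩ := exists_consecutive hfin ⟨a, ha, hlt⟩
    have had : a ≤ d := not_lt.1 fun hda => hgap a ⟨hda, hlt⟩ ha
    have hprev := ih hd had (by omega)
    have hlast := hstep d hd b hb hdb hgap
    push_cast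
    linarith

lemma frequently_zero_of_frequently_pos_neg {y : ℝ → ℝ} (hy : Continuous y)
    (hpos : ∃ᶠ t in atTop, 0 < y t) (hneg : ∃ᶠ t in atTop, y t < 0) : ∃ᶠ t in atTop, y t = 0 := by
  rw [frequently_atTop] at *
  intro T
  obtain ⟨t₁, ht₁, hy₁⟩ := hneg T
  obtain ⟨t₂, ht₂, hy₂⟩ := hpos T
  obtain ⟨t, ht, h0⟩ :=
    intermediate_value_uIcc hy.continuousOn (mem_uIcc.2 (Or.inl ⟨hy₁.le, hy₂.le⟩))
  exact ⟨t, (le_inf ht₁ ht₂).trans ht.1, h0⟩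

lemma abs_le_mul_abs_cos_add_nat_mul_pi {x : ℝ} (hx : |x| ≤ π / 2) (n : ℕ) :
    |x| ≤ π / 2 * |cos (x + n * π + π / 2)| := by
  have hsin : |cos (x + n * π + π / 2)| = |sin x| := by
    rw [Real.cos_add_pi_div_two, abs_neg, Real.sin_add_nat_mul_pi, abs_mul,
      abs_neg_one_pow, one_mul]
  have := Real.mul_abs_le_abs_sin hx
  rw [hsin]
  calc |x| = π / 2 * (2 / π * |x|) := by field_simp
    _ ≤ π / 2 * |sin x| := by gcongr

namespace TurningPointPhase

variable {q φ r y y' w : ℝ → ℝ} {τ a b M : ℝ}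

lemma finite_zeros_Iio (P : TurningPointPhase q τ φ r) (h : LinearODESol q y y') (hy : y ≠ 0)
    (hM : ∀ t, |y t| ≤ M) (b : ℝ) : ({t | y t = 0} ∩ Iio b).Finite :=
  (h.finite_zeros_Icc P.continuous hy τ b).subset fun _ ht =>
    ⟨⟨(P.gt_of_zero h hy hM ht.1).le, le_of_lt ht.2⟩, ht.1⟩

lemma phase_gap_ncard (P : TurningPointPhase q τ φ r) (h : LinearODESol q y y') (hy : y ≠ 0)
    (hM : ∀ t, |y t| ≤ M) (ha : y a = 0) (hb : y b = 0) (hab : a ≤ b) :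
    (({t | y t = 0} ∩ Iio b).ncard - ({t | y t = 0} ∩ Iio a).ncard) * π + r b - r a ≤ φ b - φ a ∧
      φ b - φ a ≤ (({t | y t = 0} ∩ Iio b).ncard - ({t | y t = 0} ∩ Iio a).ncard) * π := by
  have hfin := P.finite_zeros_Iio h hy hM
  have hgap : ∀ a ∈ {t | y t = 0}, ∀ b ∈ {t | y t = 0}, a < b →
      (∀ t ∈ Ioo a b, t ∉ {t | y t = 0}) → π + r b - r a ≤ φ b - φ a ∧ φ b - φ a ≤ π :=
    fun a ha b hb hab hne => P.phase_gap h hy (P.gt_of_zero h hy hM ha) hab ha hb hne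
  have hupper := le_add_ncard_sub_mul_of_consecutive hfin (u := φ) (c := π)
    (fun a ha b hb hab hne => by linarith [(hgap a ha b hb hab hne).2]) ha hb hab
  have hlower := le_add_ncard_sub_mul_of_consecutive hfin (u := r - φ) (c := -π)
    (fun a ha b hb hab hne => by simp only [Pi.sub_apply]; linarith [(hgap a ha b hb hab hne).1])
    ha hb hab
  simp only [Pi.sub_apply] at hlower
  constructor <;> linarith

lemma phase_ncard_bounds (P : TurningPointPhase q τ φ r) (h : LinearODESol q y y') (hy : y ≠ 0)
    (hM : ∀ t, |y t| ≤ M) (hb : y b = 0) :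
    ({t | y t = 0} ∩ Iio b).ncard * π + π / 2 ≤ φ b ∧
      φ b ≤ (({t | y t = 0} ∩ Iio b).ncard + 1) * π := by
  obtain ⟨a, ha, hab, hempty⟩ := exists_first_le (P.finite_zeros_Iio h hy hM) hb
  have hfirst := P.phase_first_zero h hy hM ha fun t hta ht => hempty.subset ⟨ht, hta⟩
  have hgap := P.phase_gap_ncard h hy hM ha hb hab
  rw [hempty, ncard_empty, Nat.cast_zero, sub_zero] at hgap
  have hr := P.corr_nonneg b (P.gt_of_zero h hy hM hb)
  constructor <;> linarith [hgap.1, hgap.2, hfirst.1, hfirst.2]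

lemma frequently_phase_eq_add_int_mul (P : TurningPointPhase q τ φ r) (hφ : Tendsto φ atTop atTop)
    (θ : ℝ) : ∃ᶠ t in atTop, ∃ n : ℤ, φ t = θ + n * (2 * π) := by
  rw [frequently_atTop]
  intro T
  set s := max T (τ + 1)
  have hs : Ici s ⊆ Ioi τ := fun t ht => (lt_add_one τ).trans_le ((le_max_right _ _).trans ht)
  obtain ⟨n, hn⟩ := exists_nat_ge ((φ s - θ) / (2 * π))
  have hle : φ s ≤ θ + n * (2 * π) := by
    linarith [(div_le_iff₀ (by positivity : 0 < 2 * π)).1 hn]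
  obtain ⟨t, ht, hφt⟩ := isPreconnected_Ici.intermediate_value_Ici (l := atTop) self_mem_Ici
    (le_principal_iff.2 (Ici_mem_atTop s)) (P.continuousOn_phase.mono hs) hφ hle
  exact ⟨t, (le_max_left _ _).trans ht, n, by exact_mod_cast hφt⟩

/-- The phase passes through every value mod `2π`, in particular where the cosine is `±1`. -/
lemma frequently_pos_and_frequently_neg (P : TurningPointPhase q τ φ r)
    (hφ : Tendsto φ atTop atTop) (hw : ∀ t, 0 < w t)
    (hlim : Tendsto (fun t => w t * y t - cos (φ t - π / 4)) atTop (𝓝 0)) :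
    (∃ᶠ t in atTop, 0 < y t) ∧ ∃ᶠ t in atTop, y t < 0 := by
  have hclose : ∀ᶠ t in atTop, |w t * y t - cos (φ t - π / 4)| < 1 := by
    simpa [Real.dist_eq] using (Metric.tendsto_nhds.1 hlim) 1 one_pos
  constructor
  · refine ((P.frequently_phase_eq_add_int_mul hφ (π / 4)).and_eventually hclose).mono ?_
    rintro t ⟨⟨n, hn⟩, ht⟩
    rw [hn, add_sub_cancel_left, Real.cos_int_mul_two_pi] at ht
    exact pos_of_mul_pos_right (by linarith [(abs_lt.1 ht).1]) (hw t).le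
  · refine ((P.frequently_phase_eq_add_int_mul hφ (π / 4 + π)).and_eventually hclose).mono ?_
    rintro t ⟨⟨n, hn⟩, ht⟩
    rw [hn, show π / 4 + π + n * (2 * π) - π / 4 = n * (2 * π) + π by ring,
      Real.cos_int_mul_two_pi_add_pi] at ht
    exact neg_of_mul_neg_right (by linarith [(abs_lt.1 ht).2]) (hw t).le

lemma tendsto_phase_sub_ncard_mul_pi (P : TurningPointPhase q τ φ r) (h : LinearODESol q y y')
    (hy : y ≠ 0) (hM : ∀ t, |y t| ≤ M)
    (hlim : Tendsto (fun t => w t * y t - cos (φ t - π / 4)) atTop (𝓝 0)) :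
    Tendsto (fun b => φ b - ({t | y t = 0} ∩ Iio b).ncard * π) (atTop ⊓ 𝓟 {t | y t = 0})
      (𝓝 (3 / 4 * π)) := by
  rw [tendsto_iff_norm_sub_tendsto_zero]
  have hcos := ((hlim.mono_left inf_le_left (y := atTop ⊓ 𝓟 {t | y t = 0})).norm).const_mul (π / 2)
  rw [norm_zero, mul_zero] at hcos
  refine squeeze_zero' (Eventually.of_forall fun _ => norm_nonneg _) ?_ hcos
  filter_upwards [mem_inf_of_right (mem_principal_self _)] with b hb
  have hbounds := P.phase_ncard_bounds h hy hM hb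
  set n := ({t | y t = 0} ∩ Iio b).ncard
  have hquarter : |φ b - n * π - 3 / 4 * π| ≤ π / 2 := by
    rw [abs_le]; constructor <;> linarith [Real.pi_pos]
  have := abs_le_mul_abs_cos_add_nat_mul_pi hquarter n
  rwa [show φ b - n * π - 3 / 4 * π + n * π + π / 2 = φ b - π / 4 by ring, ← abs_neg (cos _),
    ← zero_sub, ← mul_zero (w b), ← show y b = 0 from hb] at this

theorem phase_zero_bounds (P : TurningPointPhase q τ φ r) (h : LinearODESol q y y')
    (hM : ∀ t, |y t| ≤ M) (hφ : Tendsto φ atTop atTop) (hw : ∀ t, 0 < w t)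
    (hlim : Tendsto (fun t => w t * y t - cos (φ t - π / 4)) atTop (𝓝 0)) (ha : y a = 0) :
    (({t | y t = 0} ∩ Iio a).ncard + 3 / 4) * π ≤ φ a ∧
      φ a ≤ (({t | y t = 0} ∩ Iio a).ncard + 3 / 4) * π + r a := by
  obtain ⟨hpos, hneg⟩ := P.frequently_pos_and_frequently_neg hφ hw hlim
  have hy : y ≠ 0 := fun h0 => by simp [h0] at hpos
  have hzeros := frequently_zero_of_frequently_pos_neg h.continuous hpos hneg
  have : (atTop ⊓ 𝓟 {t | y t = 0}).NeBot := frequently_mem_iff_neBot.1 hzeros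
  have hconst := P.tendsto_phase_sub_ncard_mul_pi h hy hM hlim
  have hgap : ∀ᶠ b in atTop ⊓ 𝓟 {t | y t = 0}, φ b - ({t | y t = 0} ∩ Iio b).ncard * π ∈
      Icc (φ a - r a - ({t | y t = 0} ∩ Iio a).ncard * π)
        (φ a - ({t | y t = 0} ∩ Iio a).ncard * π) := by
    filter_upwards [mem_inf_of_left (Ici_mem_atTop a),
      mem_inf_of_right (mem_principal_self _)] with b hab hb
    obtain ⟨hlower, hupper⟩ := P.phase_gap_ncard h hy hM ha hb hab
    have hr := P.corr_nonneg b (P.gt_of_zero h hy hM hb)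
    constructor <;> linarith
  have hle := le_of_tendsto hconst (hgap.mono fun b hb => hb.2)
  have hge := ge_of_tendsto hconst (hgap.mono fun b hb => hb.1)
  constructor <;> linarith

end TurningPointPhase

/-! ### The Debye phase -/

/-- The phase `√(x² - ν²) - ν arccos (ν / x)` of the Debye expansion of `J_ν(x)` for `x > ν`. -/
noncomputable def debyePhase (ν x : ℝ) : ℝ := √(x ^ 2 - ν ^ 2) - ν * arccos (ν / x)

/-- The correction `p' / (2 p²)` to the Debye phase, where `p = √(x² - ν²)` and the prime denotes
differentiation in `log x`. -/
noncomputable def debyeCorrection (ν x : ℝ) : ℝ := x ^ 2 / (2 * √(x ^ 2 - ν ^ 2) ^ 3)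

section Debye

variable {ν x : ℝ}

lemma sq_sub_sq_pos (hν : 0 < ν) (hx : ν < x) : 0 < x ^ 2 - ν ^ 2 :=
  sub_pos.2 (pow_lt_pow_left₀ hx hν.le two_ne_zero)

lemma hasDerivAt_sqrt_sq_sub_sq (hν : 0 < ν) (hx : ν < x) :
    HasDerivAt (fun x => √(x ^ 2 - ν ^ 2)) (x / √(x ^ 2 - ν ^ 2)) x := by
  have hsq : HasDerivAt (fun x => x ^ 2 - ν ^ 2) (2 * x) x := by
    simpa using (hasDerivAt_pow 2 x).sub_const (ν ^ 2)
  exact (hsq.sqrt (sq_sub_sq_pos hν hx).ne').congr_deriv (mul_div_mul_left _ _ two_ne_zero)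

lemma sqrt_one_sub_div_sq (hx : 0 < x) : √(1 - (ν / x) ^ 2) = √(x ^ 2 - ν ^ 2) / x := by
  rw [div_pow, one_sub_div (by positivity), Real.sqrt_div' _ (by positivity), Real.sqrt_sq hx.le]

lemma hasDerivAt_debyePhase (hν : 0 < ν) (hx : ν < x) :
    HasDerivAt (debyePhase ν) (√(x ^ 2 - ν ^ 2) / x) x := by
  have hx0 : 0 < x := hν.trans hx
  have hlt : ν / x < 1 := (div_lt_one hx0).2 hx
  have hdiv : HasDerivAt (fun x => ν / x) (-ν / x ^ 2) x := by
    simpa using (hasDerivAt_const x ν).fun_div (hasDerivAt_id x) hx0.ne'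
  have hacos := (Real.hasDerivAt_arccos (by linarith [div_pos hν hx0]) hlt.ne).comp x hdiv
  refine ((hasDerivAt_sqrt_sq_sub_sq hν hx).sub (hacos.const_mul ν)).congr_deriv ?_
  have hp := Real.sqrt_pos.2 (sq_sub_sq_pos hν hx)
  have hp2 := Real.sq_sqrt (sq_sub_sq_pos hν hx).le
  rw [sqrt_one_sub_div_sq hx0]
  field_simp
  linarith

lemma hasDerivAt_debyeCorrection (hν : 0 < ν) (hx : ν < x) :
    HasDerivAt (debyeCorrection ν) (x / √(x ^ 2 - ν ^ 2) ^ 3 -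
      3 * x ^ 3 / (2 * √(x ^ 2 - ν ^ 2) ^ 5)) x := by
  have hp := Real.sqrt_pos.2 (sq_sub_sq_pos hν hx)
  refine ((hasDerivAt_pow 2 x).fun_div (((hasDerivAt_sqrt_sq_sub_sq hν hx).fun_pow 3).const_mul 2)
    (by positivity)).congr_deriv ?_
  field_simp
  push_cast
  ring

lemma deriv_debyeCorrection_mul_add_nonpos (hν : 0 < ν) (hx : ν < x) :
    (x / √(x ^ 2 - ν ^ 2) ^ 3 - 3 * x ^ 3 / (2 * √(x ^ 2 - ν ^ 2) ^ 5)) * x +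
      √(x ^ 2 - ν ^ 2) * debyeCorrection ν x ^ 2 ≤ 0 := by
  have hp := Real.sqrt_pos.2 (sq_sub_sq_pos hν hx)
  have hp2 := Real.sq_sqrt (sq_sub_sq_pos hν hx).le
  rw [debyeCorrection]
  generalize √(x ^ 2 - ν ^ 2) = p at *
  have hvalue : (x / p ^ 3 - 3 * x ^ 3 / (2 * p ^ 5)) * x + p * (x ^ 2 / (2 * p ^ 3)) ^ 2 =
      -(x ^ 2 * (x ^ 2 + 4 * ν ^ 2) / (4 * p ^ 5)) := by
    field_simp
    rw [hp2]
    ring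
  rw [hvalue, neg_nonpos]
  positivity

lemma debyePhase_self (hν : ν ≠ 0) : debyePhase ν ν = 0 := by
  simp [debyePhase, div_self hν]

lemma continuousAt_debyePhase (hx : x ≠ 0) : ContinuousAt (debyePhase ν) x := by
  unfold debyePhase
  fun_prop (disch := exact hx)

lemma mul_gfun_div (hx : 0 < x) : x * gfun (ν / x) = debyePhase ν x / π := by
  rw [gfun, debyePhase, sqrt_one_sub_div_sq hx]
  field_simp

lemma turningPointPhase_debyePhase (hν : 0 < ν) :
    TurningPointPhase (fun t => exp t ^ 2 - ν ^ 2) (log ν) (fun t => debyePhase ν (exp t))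
      (fun t => debyeCorrection ν (exp t)) := by
  have hlt : ∀ t > log ν, ν < exp t := fun t ht => (Real.log_lt_iff_lt_exp hν).1 ht
  have hderiv : ∀ t > log ν, HasDerivAt (fun t => debyeCorrection ν (exp t)) _ t := fun t ht =>
    (hasDerivAt_debyeCorrection hν (hlt t ht)).comp t (Real.hasDerivAt_exp t)
  refine ⟨by fun_prop, fun t ht => ?_, fun t ht => sq_sub_sq_pos hν (hlt t ht), fun t ht => ?_,
    fun t ht => ?_, ?_, fun t _ => by unfold debyeCorrection; positivity,
    fun t ht => (hderiv t ht).differentiableAt, fun t ht => ?_⟩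
  · exact sub_neg.2 (pow_lt_pow_left₀ ((Real.lt_log_iff_exp_lt hν).1 ht) (exp_pos t).le two_ne_zero)
  · exact ((hasDerivAt_debyePhase hν (hlt t ht)).comp t (Real.hasDerivAt_exp t)).congr_deriv
      (div_mul_cancel₀ _ (exp_pos t).ne')
  · refine ((hasDerivAt_sqrt_sq_sub_sq hν (hlt t ht)).comp t (Real.hasDerivAt_exp t)).congr_deriv ?_
    have hp := Real.sqrt_pos.2 (sq_sub_sq_pos hν (hlt t ht))
    rw [debyeCorrection]
    field_simp
  · have hcont : ContinuousAt (fun t => debyePhase ν (exp t)) (log ν) :=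
      (continuousAt_debyePhase (exp_pos _).ne').comp Real.continuous_exp.continuousAt
    simpa only [Real.exp_log hν, debyePhase_self hν.ne'] using
      hcont.tendsto.mono_left nhdsWithin_le_nhds
  · rw [(hderiv t ht).deriv]
    exact deriv_debyeCorrection_mul_add_nonpos hν (hlt t ht)

lemma sub_sqrt_sq_sub_sq_le (hν : 0 < ν) (hx : ν ≤ x) : x - √(x ^ 2 - ν ^ 2) ≤ ν * (ν / x) := by
  have hx0 : 0 < x := hν.trans_le hx
  have hle : x - ν * (ν / x) ≤ √(x ^ 2 - ν ^ 2) := by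
    refine Real.le_sqrt_of_sq_le ?_
    have h1 : x * (ν / x) = ν := mul_div_cancel₀ _ hx0.ne'
    have h2 : (ν / x) ^ 2 ≤ 1 := pow_le_one₀ (by positivity) ((div_le_one hx0).2 hx)
    nlinarith [mul_le_mul_of_nonneg_left h2 (sq_nonneg ν)]
  linarith

lemma tendsto_sub_debyePhase (hν : 0 < ν) :
    Tendsto (fun x => x - ν * π / 2 - debyePhase ν x) atTop (𝓝 0) := by
  have hdiv : Tendsto (fun x => ν / x) atTop (𝓝 0) := tendsto_const_nhds.div_atTop tendsto_id
  have hacos : Tendsto (fun x => arccos (ν / x)) atTop (𝓝 (π / 2)) := by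
    simpa only [Real.arccos_zero, Function.comp_def] using
      (Real.continuous_arccos.tendsto 0).comp hdiv
  have hsqrt : Tendsto (fun x => x - √(x ^ 2 - ν ^ 2)) atTop (𝓝 0) := by
    refine squeeze_zero' ?_ ?_ (by simpa using hdiv.const_mul ν)
    · filter_upwards [eventually_ge_atTop 0] with x hx
      exact sub_nonneg.2 ((Real.sqrt_le_left hx).2 (sub_le_self _ (sq_nonneg ν)))
    · filter_upwards [eventually_ge_atTop ν] with x hx using sub_sqrt_sq_sub_sq_le hν hx
  have hsum := hsqrt.add ((hacos.sub_const (π / 2)).const_mul ν)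
  rw [sub_self, mul_zero, add_zero] at hsum
  refine hsum.congr fun x => ?_
  rw [debyePhase]
  ring

lemma tendsto_debyePhase_atTop (hν : 0 < ν) : Tendsto (debyePhase ν) atTop atTop := by
  have hlin : Tendsto (fun x => x + -(ν * π / 2)) atTop atTop :=
    tendsto_atTop_add_const_right _ _ tendsto_id
  refine (hlin.atTop_add (tendsto_sub_debyePhase hν).neg).congr fun x => ?_
  ring

end Debye

/-! ### Bessel's equation -/

/-- The `n`-th derivative in `x` of Anger's integral `∫ θ in 0..π, cos (x sin θ - ν θ)`; the shift
of the argument by `n π / 2` differentiates the cosine `n` times. -/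
noncomputable def angerIntegral (n : ℕ) (ν x : ℝ) : ℝ :=
  ∫ θ in (0)..π, sin θ ^ n * cos (x * sin θ - ν * θ + n * (π / 2))

/-- The `n`-th derivative in `x` of Schläfli's integral `∫ t in Ioi 0, exp (-x sinh t - ν t)`. -/
noncomputable def schlafliIntegral (n : ℕ) (ν x : ℝ) : ℝ :=
  ∫ t in Ioi 0, (-sinh t) ^ n * exp (-x * sinh t - ν * t)

/-- The `n`-th derivative of `besselJ ν` on `(0, ∞)`. -/
noncomputable def besselJDeriv (n : ℕ) (ν x : ℝ) : ℝ :=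
  (1 / π) * angerIntegral n ν x - (sin (ν * π) / π) * schlafliIntegral n ν x

section Bessel

variable {ν x δ t : ℝ}

lemma hasDerivAt_angerIntegral (n : ℕ) (ν x : ℝ) :
    HasDerivAt (angerIntegral n ν) (angerIntegral (n + 1) ν x) x := by
  refine (intervalIntegral.hasDerivAt_integral_of_dominated_loc_of_deriv_le (s := univ)
    (F := fun x θ => sin θ ^ n * cos (x * sin θ - ν * θ + n * (π / 2)))
    (F' := fun x θ => sin θ ^ (n + 1) * cos (x * sin θ - ν * θ + (n + 1 : ℕ) * (π / 2)))
    (bound := fun _ => 1) univ_mem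
    (.of_forall fun x => (by fun_prop : Continuous _).aestronglyMeasurable)
    ((by fun_prop : Continuous _).intervalIntegrable _ _)
    ((by fun_prop : Continuous _).aestronglyMeasurable)
    (.of_forall fun θ _ z _ => ?_) intervalIntegrable_const (.of_forall fun θ _ z _ => ?_)).2
  · rw [norm_mul, norm_pow]
    exact mul_le_one₀ (pow_le_one₀ (norm_nonneg _) (Real.abs_sin_le_one θ)) (norm_nonneg _)
      (Real.abs_cos_le_one _)
  · have harg : HasDerivAt (fun x => x * sin θ - ν * θ + n * (π / 2)) (sin θ) z := by
      simpa only [one_mul, id] using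
        (((hasDerivAt_id z).mul_const (sin θ)).sub_const (ν * θ)).add_const (n * (π / 2))
    refine (harg.cos.const_mul (sin θ ^ n)).congr_deriv ?_
    rw [Nat.cast_add_one, add_one_mul, ← add_assoc, Real.cos_add_pi_div_two]
    ring

lemma angerIntegral_ode (ν x : ℝ) :
    x ^ 2 * angerIntegral 2 ν x + x * angerIntegral 1 ν x + (x ^ 2 - ν ^ 2) * angerIntegral 0 ν x =
      (x - ν) * sin (ν * π) := by
  have hprim : ∀ θ ∈ uIcc 0 π, HasDerivAt (fun θ => (x * cos θ + ν) * sin (x * sin θ - ν * θ))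
      (x ^ 2 * (sin θ ^ 2 * cos (x * sin θ - ν * θ + (2 : ℕ) * (π / 2))) +
        x * (sin θ ^ 1 * cos (x * sin θ - ν * θ + (1 : ℕ) * (π / 2))) +
        (x ^ 2 - ν ^ 2) * (sin θ ^ 0 * cos (x * sin θ - ν * θ + (0 : ℕ) * (π / 2)))) θ := by
    intro θ _
    have harg : HasDerivAt (fun θ => x * sin θ - ν * θ) (x * cos θ - ν) θ := by
      simpa only [mul_one, id] using
        ((Real.hasDerivAt_sin θ).const_mul x).fun_sub ((hasDerivAt_id θ).const_mul ν)
    have hfac : HasDerivAt (fun θ => x * cos θ + ν) (x * -sin θ) θ :=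
      ((Real.hasDerivAt_cos θ).const_mul x).add_const ν
    refine (hfac.fun_mul harg.sin).congr_deriv ?_
    rw [Nat.cast_two, mul_div_cancel₀ π two_ne_zero, Real.cos_add_pi, Nat.cast_one, one_mul,
      Real.cos_add_pi_div_two, Nat.cast_zero, zero_mul, add_zero]
    linear_combination x ^ 2 * cos (x * sin θ - ν * θ) * Real.sin_sq_add_cos_sq θ
  unfold angerIntegral
  simp only [← intervalIntegral.integral_const_mul]
  rw [← intervalIntegral.integral_add, ← intervalIntegral.integral_add,
    intervalIntegral.integral_eq_sub_of_hasDerivAt hprim]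
  · simp only [cos_pi, mul_neg, mul_one, sin_pi, mul_zero, zero_sub, sin_neg, cos_zero, sin_zero,
      sub_self, sub_zero]
    ring
  all_goals exact (by fun_prop : Continuous _).intervalIntegrable _ _

lemma norm_schlafli_integrand_le (n : ℕ) (hδ : 0 < δ) (hx : δ ≤ x) (ht : 0 ≤ t) :
    ‖(-sinh t) ^ n * exp (-x * sinh t - ν * t)‖ ≤ n.factorial / δ ^ n * exp (-ν * t) := by
  have hs : 0 ≤ sinh t := Real.sinh_nonneg_iff.2 ht
  have hpow : sinh t ^ n ≤ n.factorial / δ ^ n * exp (x * sinh t) := by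
    calc sinh t ^ n = n.factorial / δ ^ n * ((δ * sinh t) ^ n / n.factorial) := by
          rw [mul_pow]
          field_simp
      _ ≤ n.factorial / δ ^ n * exp (δ * sinh t) := by
          gcongr
          exact Real.pow_div_factorial_le_exp _ (by positivity) n
      _ ≤ n.factorial / δ ^ n * exp (x * sinh t) := by gcongr
  calc ‖(-sinh t) ^ n * exp (-x * sinh t - ν * t)‖
      = sinh t ^ n * exp (-x * sinh t - ν * t) := by
        rw [norm_mul, norm_pow, norm_neg, Real.norm_of_nonneg hs,
          Real.norm_of_nonneg (exp_pos _).le]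
    _ ≤ n.factorial / δ ^ n * exp (x * sinh t) * exp (-x * sinh t - ν * t) := by gcongr
    _ = n.factorial / δ ^ n * exp (-ν * t) := by
        rw [mul_assoc, ← Real.exp_add]
        ring_nf

lemma aestronglyMeasurable_schlafli_integrand (n : ℕ) (ν x : ℝ) (μ : Measure ℝ) :
    AEStronglyMeasurable (fun t => (-sinh t) ^ n * exp (-x * sinh t - ν * t)) μ :=
  (by fun_prop : Continuous _).aestronglyMeasurable

lemma integrableOn_schlafli_integrand (n : ℕ) (hν : 0 < ν) (hx : 0 < x) :
    IntegrableOn (fun t => (-sinh t) ^ n * exp (-x * sinh t - ν * t)) (Ioi 0) := by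
  refine ((exp_neg_integrableOn_Ioi 0 hν).const_mul (n.factorial / x ^ n)).mono'
    (aestronglyMeasurable_schlafli_integrand n ν x _) ?_
  filter_upwards [ae_restrict_mem measurableSet_Ioi] with t ht
  exact norm_schlafli_integrand_le n hx le_rfl (le_of_lt ht)

lemma hasDerivAt_schlafliIntegral (n : ℕ) (hν : 0 < ν) (hx : 0 < x) :
    HasDerivAt (schlafliIntegral n ν) (schlafliIntegral (n + 1) ν x) x := by
  refine (hasDerivAt_integral_of_dominated_loc_of_deriv_le
    (F' := fun x t => (-sinh t) ^ (n + 1) * exp (-x * sinh t - ν * t))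
    (Ioi_mem_nhds (half_lt_self hx))
    (.of_forall fun x => aestronglyMeasurable_schlafli_integrand n ν x _)
    (integrableOn_schlafli_integrand n hν hx)
    (aestronglyMeasurable_schlafli_integrand (n + 1) ν x _) ?_
    ((exp_neg_integrableOn_Ioi 0 hν).const_mul ((n + 1).factorial / (x / 2) ^ (n + 1)))
    (.of_forall fun t z _ => ?_)).2
  · filter_upwards [ae_restrict_mem measurableSet_Ioi] with t ht z hz
    exact norm_schlafli_integrand_le (n + 1) (half_pos hx) (le_of_lt hz) (le_of_lt ht)
  · have harg : HasDerivAt (fun x => -x * sinh t - ν * t) (-sinh t) z := by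
      simpa only [neg_one_mul, id] using
        ((hasDerivAt_id z).fun_neg.mul_const (sinh t)).sub_const (ν * t)
    exact (harg.exp.const_mul ((-sinh t) ^ n)).congr_deriv (by ring)

lemma tendsto_schlafli_primitive (hν : 0 < ν) (hx : 0 < x) :
    Tendsto (fun t => (-x * cosh t + ν) * exp (-x * sinh t - ν * t)) atTop (𝓝 0) := by
  have hexp : Tendsto (fun t => (1 + x + ν) * exp (-ν * t)) atTop (𝓝 0) := by
    simpa using (Real.tendsto_exp_atBot.comp
      (tendsto_id.const_mul_atTop_of_neg (neg_neg_of_pos hν))).const_mul (1 + x + ν)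
  refine squeeze_zero_norm' ?_ hexp
  filter_upwards [eventually_ge_atTop 0] with t ht
  have hcosh : cosh t ≤ sinh t + 1 := by
    linarith [Real.cosh_sub_sinh t, Real.exp_le_one_iff.2 (neg_nonpos.2 ht)]
  have hfac : |-x * cosh t + ν| ≤ x * sinh t + (x + ν) := by
    rw [abs_le]
    constructor <;> nlinarith [Real.cosh_pos t, Real.sinh_nonneg_iff.2 ht]
  have h0 := norm_schlafli_integrand_le (ν := ν) 0 hx le_rfl ht
  have h1 := norm_schlafli_integrand_le (ν := ν) 1 hx le_rfl ht
  have hE := exp_pos (-x * sinh t - ν * t)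
  simp only [norm_mul, pow_zero, pow_one, norm_neg, Nat.factorial_zero, Nat.factorial_one,
    Nat.cast_one, one_mul, div_one, Real.norm_of_nonneg hE.le,
    Real.norm_of_nonneg (Real.sinh_nonneg_iff.2 ht)] at h0 h1 ⊢
  calc ‖-x * cosh t + ν‖ * exp (-x * sinh t - ν * t)
      ≤ (x * sinh t + (x + ν)) * exp (-x * sinh t - ν * t) := by
        gcongr
        exact hfac
    _ = x * (sinh t * exp (-x * sinh t - ν * t)) + (x + ν) * exp (-x * sinh t - ν * t) := by ring
    _ ≤ x * (1 / x * exp (-ν * t)) + (x + ν) * exp (-ν * t) := by gcongr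
    _ = (1 + x + ν) * exp (-ν * t) := by
        field_simp
        ring

lemma schlafliIntegral_ode (hν : 0 < ν) (hx : 0 < x) :
    x ^ 2 * schlafliIntegral 2 ν x + x * schlafliIntegral 1 ν x +
      (x ^ 2 - ν ^ 2) * schlafliIntegral 0 ν x = x - ν := by
  have hprim : ∀ t ∈ Ici 0, HasDerivAt (fun t => (-x * cosh t + ν) * exp (-x * sinh t - ν * t))
      (x ^ 2 * ((-sinh t) ^ 2 * exp (-x * sinh t - ν * t)) +
        x * ((-sinh t) ^ 1 * exp (-x * sinh t - ν * t)) +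
        (x ^ 2 - ν ^ 2) * ((-sinh t) ^ 0 * exp (-x * sinh t - ν * t))) t := by
    intro t _
    have harg : HasDerivAt (fun t => -x * sinh t - ν * t) (-x * cosh t - ν) t := by
      simpa only [mul_one, id] using
        ((Real.hasDerivAt_sinh t).const_mul (-x)).fun_sub ((hasDerivAt_id t).const_mul ν)
    have hfac : HasDerivAt (fun t => -x * cosh t + ν) (-x * sinh t) t :=
      ((Real.hasDerivAt_cosh t).const_mul (-x)).add_const ν
    refine (hfac.fun_mul harg.exp).congr_deriv ?_
    linear_combination x ^ 2 * exp (-x * sinh t - ν * t) * Real.cosh_sq t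
  have hint := fun n c => (integrableOn_schlafli_integrand n hν hx).const_mul c
  have hint₂₁ := (hint 2 (x ^ 2)).fun_add (hint 1 x)
  unfold schlafliIntegral
  simp only [← integral_const_mul]
  rw [← integral_add (hint 2 _) (hint 1 _), ← integral_add hint₂₁ (hint 0 _),
    integral_Ioi_of_hasDerivAt_of_tendsto' hprim (hint₂₁.add (hint 0 _))
      (tendsto_schlafli_primitive hν hx)]
  simp only [cosh_zero, mul_one, sinh_zero, mul_zero, sub_self, exp_zero, zero_sub]
  ring

lemma besselJDeriv_zero : besselJDeriv 0 = besselJ := by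
  ext ν x
  simp [besselJDeriv, besselJ, angerIntegral, schlafliIntegral]

lemma hasDerivAt_besselJDeriv (n : ℕ) (hν : 0 < ν) (hx : 0 < x) :
    HasDerivAt (besselJDeriv n ν) (besselJDeriv (n + 1) ν x) x :=
  ((hasDerivAt_angerIntegral n ν x).const_mul _).fun_sub
    ((hasDerivAt_schlafliIntegral n hν hx).const_mul _)

lemma besselJDeriv_ode (hν : 0 < ν) (hx : 0 < x) :
    x ^ 2 * besselJDeriv 2 ν x + x * besselJDeriv 1 ν x + (x ^ 2 - ν ^ 2) * besselJDeriv 0 ν x =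
      0 := by
  unfold besselJDeriv
  linear_combination (1 / π) * angerIntegral_ode ν x -
    (sin (ν * π) / π) * schlafliIntegral_ode hν hx

lemma linearODESol_besselJ_exp (hν : 0 < ν) :
    LinearODESol (fun t => exp t ^ 2 - ν ^ 2) (fun t => besselJ ν (exp t))
      (fun t => exp t * besselJDeriv 1 ν (exp t)) where
  hasDerivAt t := by
    rw [← besselJDeriv_zero, mul_comm]
    exact (hasDerivAt_besselJDeriv 0 hν (exp_pos t)).comp t (Real.hasDerivAt_exp t)
  hasDerivAt_deriv t := by
    have hJ' := (hasDerivAt_besselJDeriv 1 hν (exp_pos t)).comp t (Real.hasDerivAt_exp t)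
    refine ((Real.hasDerivAt_exp t).fun_mul hJ').congr_deriv ?_
    rw [← besselJDeriv_zero, Function.comp]
    linear_combination besselJDeriv_ode hν (exp_pos t)

lemma abs_angerIntegral_zero_le (ν x : ℝ) : |angerIntegral 0 ν x| ≤ π := by
  have hbound := intervalIntegral.norm_integral_le_of_norm_le_const (a := 0) (b := π) (C := 1)
    (f := fun θ => cos (x * sin θ - ν * θ)) fun θ _ => Real.abs_cos_le_one _
  simpa [angerIntegral, abs_of_pos Real.pi_pos] using hbound

lemma abs_schlafliIntegral_zero_le (hx : 0 ≤ x) (hν : 0 < x + ν) :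
    |schlafliIntegral 0 ν x| ≤ 1 / (x + ν) := by
  have hint : ∫ t in Ioi 0, exp (-(x + ν) * t) = 1 / (x + ν) := by
    rw [integral_exp_mul_Ioi (neg_neg_of_pos hν), mul_zero, exp_zero, neg_div_neg_eq]
  rw [← hint, ← Real.norm_eq_abs, schlafliIntegral]
  refine norm_integral_le_of_norm_le (exp_neg_integrableOn_Ioi 0 hν) ?_
  filter_upwards [ae_restrict_mem measurableSet_Ioi] with t ht
  have hsinh : t ≤ sinh t := Real.self_le_sinh_iff.2 (le_of_lt ht)
  rw [pow_zero, one_mul, Real.norm_of_nonneg (exp_pos _).le, Real.exp_le_exp]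
  nlinarith

lemma exists_abs_besselJ_le (hν : 0 < ν) : ∃ M, ∀ x > 0, |besselJ ν x| ≤ M := by
  refine ⟨|1 / π| * π + |sin (ν * π) / π| * (1 / ν), fun x hx => ?_⟩
  rw [← besselJDeriv_zero, besselJDeriv]
  refine (abs_sub _ _).trans ?_
  rw [abs_mul, abs_mul]
  have hschlafli : |schlafliIntegral 0 ν x| ≤ 1 / ν :=
    (abs_schlafliIntegral_zero_le hx.le (by positivity)).trans (by gcongr; linarith)
  gcongr
  exact abs_angerIntegral_zero_le ν x

end Bessel

/-! ### Fresnel integrals and stationary phase -/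

section Fresnel

variable {b : ℂ} {S T : ℝ}

lemma norm_cexp_neg_mul_sq_le_one (hb : 0 ≤ b.re) (y : ℝ) : ‖Complex.exp (-b * y ^ 2)‖ ≤ 1 := by
  have hre : (-b * (y : ℂ) ^ 2).re = -(b.re * y ^ 2) := by
    rw [← Complex.ofReal_pow, Complex.re_mul_ofReal, Complex.neg_re, neg_mul]
  rw [Complex.norm_exp, hre, Real.exp_le_one_iff, neg_nonpos]
  positivity

lemma hasDerivAt_cexp_neg_mul_sq_div (hb : b ≠ 0) {y : ℝ} (hy : y ≠ 0) :
    HasDerivAt (fun y : ℝ => -(Complex.exp (-b * y ^ 2) / (2 * b * y)))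
      (Complex.exp (-b * y ^ 2) + Complex.exp (-b * y ^ 2) / (2 * b * y ^ 2)) y := by
  have hy0 : (y : ℂ) ≠ 0 := Complex.ofReal_ne_zero.2 hy
  have hid : HasDerivAt (fun y : ℝ => (y : ℂ)) 1 y := Complex.ofRealCLM.hasDerivAt
  refine ((((hid.fun_pow 2).const_mul (-b)).cexp).fun_div (hid.const_mul (2 * b))
    (mul_ne_zero (mul_ne_zero two_ne_zero hb) hy0)).fun_neg.congr_deriv ?_
  field_simp
  ring

lemma integral_inv_sq (hT : 0 < T) (hTS : T ≤ S) : ∫ y in T..S, (y ^ 2)⁻¹ = T⁻¹ - S⁻¹ := by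
  have hne : ∀ y ∈ uIcc T S, y ≠ 0 := fun y hy => (hT.trans_le (uIcc_of_le hTS ▸ hy).1).ne'
  rw [intervalIntegral.integral_eq_sub_of_hasDerivAt (f := fun y => -y⁻¹), neg_sub_neg]
  · exact fun y hy => (hasDerivAt_inv (hne y hy)).fun_neg.congr_deriv (neg_neg _)
  · exact (ContinuousOn.inv₀ (by fun_prop)
      fun y hy => pow_ne_zero 2 (hne y hy)).intervalIntegrable

lemma integral_cexp_neg_mul_sq_eq (hb : b ≠ 0) (hT : 0 < T) (hTS : T ≤ S) :
    ∫ y in T..S, Complex.exp (-b * y ^ 2) =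
      Complex.exp (-b * T ^ 2) / (2 * b * T) - Complex.exp (-b * S ^ 2) / (2 * b * S) -
        ∫ y in T..S, Complex.exp (-b * y ^ 2) / (2 * b * y ^ 2) := by
  have hne : ∀ y ∈ uIcc T S, y ≠ 0 := fun y hy => (hT.trans_le (uIcc_of_le hTS ▸ hy).1).ne'
  have hint : IntervalIntegrable (fun y : ℝ => Complex.exp (-b * y ^ 2)) volume T S :=
    (by fun_prop : Continuous _).intervalIntegrable _ _
  have hint₂ : IntervalIntegrable (fun y : ℝ => Complex.exp (-b * y ^ 2) / (2 * b * y ^ 2))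
      volume T S :=
    (ContinuousOn.div (by fun_prop) (by fun_prop) fun y hy => mul_ne_zero
      (mul_ne_zero two_ne_zero hb) (pow_ne_zero 2 (Complex.ofReal_ne_zero.2 (hne y hy)))
      ).intervalIntegrable
  have hparts := intervalIntegral.integral_eq_sub_of_hasDerivAt
    (fun y hy => hasDerivAt_cexp_neg_mul_sq_div hb (hne y hy)) (hint.add hint₂)
  rwa [intervalIntegral.integral_add hint hint₂, neg_sub_neg, ← eq_sub_iff_add_eq] at hparts

lemma norm_integral_cexp_neg_mul_sq_le (hb : 0 ≤ b.re) (hb0 : b ≠ 0) (hT : 0 < T) (hTS : T ≤ S) :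
    ‖∫ y in T..S, Complex.exp (-b * y ^ 2)‖ ≤ 1 / (‖b‖ * T) := by
  have hend : ∀ y : ℝ, 0 < y →
      ‖Complex.exp (-b * y ^ 2) / (2 * b * y)‖ ≤ (2 * ‖b‖)⁻¹ * y⁻¹ := fun y hy => by
    rw [norm_div, norm_mul, norm_mul, Complex.norm_two, Complex.norm_of_nonneg hy.le, ← mul_inv,
      ← one_div]
    gcongr
    exact norm_cexp_neg_mul_sq_le_one hb y
  have hrest : ‖∫ y in T..S, Complex.exp (-b * y ^ 2) / (2 * b * y ^ 2)‖ ≤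
      (2 * ‖b‖)⁻¹ * (T⁻¹ - S⁻¹) := by
    rw [← integral_inv_sq hT hTS, ← intervalIntegral.integral_const_mul]
    refine intervalIntegral.norm_integral_le_of_norm_le hTS (.of_forall fun y _ => ?_) ?_
    · rw [norm_div, norm_mul, norm_mul, Complex.norm_two, norm_pow, Complex.norm_real,
        Real.norm_eq_abs, sq_abs, ← mul_inv, ← one_div]
      gcongr
      exact norm_cexp_neg_mul_sq_le_one hb y
    · refine (ContinuousOn.mul continuousOn_const (ContinuousOn.inv₀ (by fun_prop)
        fun y hy => pow_ne_zero 2 ?_)).intervalIntegrable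
      exact (hT.trans_le (uIcc_of_le hTS ▸ hy).1).ne'
  rw [integral_cexp_neg_mul_sq_eq hb0 hT hTS]
  calc _ ≤ (2 * ‖b‖)⁻¹ * T⁻¹ + (2 * ‖b‖)⁻¹ * S⁻¹ + (2 * ‖b‖)⁻¹ * (T⁻¹ - S⁻¹) :=
        (norm_sub_le _ _).trans (add_le_add ((norm_sub_le _ _).trans
          (add_le_add (hend T hT) (hend S (hT.trans_le hTS)))) hrest)
    _ = 1 / (‖b‖ * T) := by
        field_simp
        ring

lemma norm_integral_cexp_neg_mul_sq_sub_le_of_re_pos (hb : 0 < b.re) (hT : 0 < T) :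
    ‖(∫ y in (0)..T, Complex.exp (-b * y ^ 2)) - (π / b) ^ (1 / 2 : ℂ) / 2‖ ≤ 1 / (‖b‖ * T) := by
  have hb0 : b ≠ 0 := by
    rintro rfl
    exact hb.ne' Complex.zero_re
  have hlim := intervalIntegral_tendsto_integral_Ioi 0
    (integrable_cexp_neg_mul_sq hb).integrableOn tendsto_id
  rw [integral_gaussian_complex_Ioi hb] at hlim
  refine le_of_tendsto (hlim.const_sub _).norm ?_
  filter_upwards [eventually_ge_atTop T] with S hS
  rw [norm_sub_rev, id, intervalIntegral.integral_interval_sub_left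
    ((by fun_prop : Continuous _).intervalIntegrable _ _)
    ((by fun_prop : Continuous _).intervalIntegrable _ _)]
  exact norm_integral_cexp_neg_mul_sq_le hb.le hb0 hT hS

lemma norm_integral_cexp_neg_mul_sq_sub_le (hb : 0 ≤ b.re) (hb0 : b ≠ 0) (hT : 0 < T) :
    ‖(∫ y in (0)..T, Complex.exp (-b * y ^ 2)) - (π / b) ^ (1 / 2 : ℂ) / 2‖ ≤ 1 / (‖b‖ * T) := by
  have hε : Tendsto (fun ε : ℝ => b + ε) (𝓝[>] 0) (𝓝 b) := by
    have hcont : ContinuousAt (fun ε : ℝ => b + ε) 0 := by fun_prop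
    simpa using hcont.tendsto.mono_left nhdsWithin_le_nhds
  have hslit : π / b ∈ Complex.slitPlane := by
    have hre : 0 ≤ (π / b).re := by
      rw [div_eq_mul_inv, Complex.re_ofReal_mul, Complex.inv_re]
      exact mul_nonneg Real.pi_pos.le (div_nonneg hb (Complex.normSq_nonneg b))
    refine Complex.mem_slitPlane_iff_arg.2 ⟨fun harg => ?_,
      div_ne_zero (Complex.ofReal_ne_zero.2 Real.pi_ne_zero) hb0⟩
    have := (le_abs_self _).trans (Complex.abs_arg_le_pi_div_two_iff.2 hre)
    linarith [Real.pi_pos]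
  have hint : Continuous fun b : ℂ => ∫ y in (0)..T, Complex.exp (-b * y ^ 2) :=
    intervalIntegral.continuous_parametric_intervalIntegral_of_continuous' (by fun_prop) _ _
  have hpow : ContinuousAt (fun b : ℂ => (π / b) ^ (1 / 2 : ℂ) / 2) b :=
    ((continuousAt_cpow_const hslit).comp (continuousAt_const.div₀ continuousAt_id hb0)).div_const 2
  have hrhs : ContinuousAt (fun b : ℂ => 1 / (‖b‖ * T)) b :=
    continuousAt_const.div₀ (by fun_prop) (by positivity)
  refine le_of_tendsto_of_tendsto
    ((hint.continuousAt.sub hpow).norm.tendsto.comp hε) (hrhs.tendsto.comp hε) ?_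
  filter_upwards [self_mem_nhdsWithin] with ε hε
  refine norm_integral_cexp_neg_mul_sq_sub_le_of_re_pos ?_ hT
  rw [Complex.add_re, Complex.ofReal_re]
  exact add_pos_of_nonneg_of_pos hb hε

/-- The Fresnel integral `∫ v in 0..T, e^{-i v²}`. -/
noncomputable def fresnelIntegral (T : ℝ) : ℂ := ∫ v in (0)..T, Complex.exp (-Complex.I * v ^ 2)

lemma hasDerivAt_fresnelIntegral (T : ℝ) :
    HasDerivAt fresnelIntegral (Complex.exp (-Complex.I * T ^ 2)) T := by
  have hcont : Continuous fun v : ℝ => Complex.exp (-Complex.I * v ^ 2) := by fun_prop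
  exact (hcont.integral_hasStrictDerivAt 0 T).hasDerivAt

lemma continuous_fresnelIntegral : Continuous fresnelIntegral :=
  continuous_iff_continuousAt.2 fun T => (hasDerivAt_fresnelIntegral T).continuousAt

lemma fresnelIntegral_zero : fresnelIntegral 0 = 0 := intervalIntegral.integral_same

lemma norm_fresnelIntegral_le (hT : 0 ≤ T) : ‖fresnelIntegral T‖ ≤ 2 := by
  have hle : ∀ T ∈ Icc (0 : ℝ) 1, ‖fresnelIntegral T‖ ≤ 1 := fun T hT => by
    have hnorm := intervalIntegral.norm_integral_le_of_norm_le_const (a := 0) (b := T)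
      fun v _ => norm_cexp_neg_mul_sq_le_one (b := Complex.I) (by simp) v
    rw [sub_zero, one_mul, abs_of_nonneg hT.1] at hnorm
    exact hnorm.trans hT.2
  rcases le_total T 1 with h1 | h1
  · exact (hle T ⟨hT, h1⟩).trans one_le_two
  · have htail := norm_integral_cexp_neg_mul_sq_le (b := Complex.I) (by simp) Complex.I_ne_zero
      one_pos h1
    rw [Complex.norm_I, one_mul, div_one, ← intervalIntegral.integral_interval_sub_left (a := 0)
      ((by fun_prop : Continuous _).intervalIntegrable _ _)
      ((by fun_prop : Continuous _).intervalIntegrable _ _)] at htail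
    have htri := norm_add_le (fresnelIntegral T - fresnelIntegral 1) (fresnelIntegral 1)
    rw [sub_add_cancel] at htri
    have hone := hle 1 ⟨zero_le_one, le_rfl⟩
    unfold fresnelIntegral at *
    linarith

lemma pi_div_I_cpow_half :
    (π / Complex.I : ℂ) ^ (1 / 2 : ℂ) = √π * Complex.exp (-(π / 4) * Complex.I) := by
  have hI : -Complex.I ≠ 0 := neg_ne_zero.2 Complex.I_ne_zero
  rw [Complex.div_I, ← mul_neg, Complex.cpow_def_of_ne_zero
    (mul_ne_zero (Complex.ofReal_ne_zero.2 Real.pi_ne_zero) hI),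
    Complex.log_ofReal_mul Real.pi_pos hI, Complex.log_neg_I, add_mul, Complex.exp_add,
    Real.sqrt_eq_rpow, Real.rpow_def_of_pos Real.pi_pos]
  push_cast
  ring_nf

/-- The limit of the Fresnel integral at infinity. -/
noncomputable def fresnelLimit : ℂ := √π * Complex.exp (-(π / 4) * Complex.I) / 2

lemma tendsto_fresnelIntegral : Tendsto fresnelIntegral atTop (𝓝 fresnelLimit) := by
  rw [fresnelLimit, ← pi_div_I_cpow_half, tendsto_iff_norm_sub_tendsto_zero]
  refine squeeze_zero' (.of_forall fun _ => norm_nonneg _) ?_ tendsto_inv_atTop_zero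
  filter_upwards [eventually_gt_atTop 0] with T hT
  simpa [fresnelIntegral] using
    norm_integral_cexp_neg_mul_sq_sub_le (b := Complex.I) (by simp) Complex.I_ne_zero hT

lemma hasDerivAt_fresnelIntegral_sqrt_mul {x : ℝ} (hx : 0 ≤ x) {ψ : ℝ → ℝ} {ψ' s : ℝ}
    (hψ : HasDerivAt ψ ψ' s) : HasDerivAt (fun s => fresnelIntegral (√x * ψ s))
      (√x * ψ' * Complex.exp (-Complex.I * (x * ψ s ^ 2))) s := by
  refine ((hasDerivAt_fresnelIntegral _).scomp s (hψ.const_mul (√x))).congr_deriv ?_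
  rw [← Complex.ofReal_pow, mul_pow, Real.sq_sqrt hx, Complex.real_smul]
  push_cast
  rfl

variable {c d : ℝ} {ψ ψ' : ℝ → ℝ} {w w' : ℝ → ℂ}

lemma sqrt_mul_integral_cexp_mul_eq {x : ℝ} (hx : 0 ≤ x) (hcd : c ≤ d)
    (hψ : ∀ s ∈ Icc c d, HasDerivAt ψ (ψ' s) s) (hψ' : ContinuousOn ψ' (Icc c d))
    (hw : ∀ s ∈ Icc c d, HasDerivAt w (w' s) s) (hw' : ContinuousOn w' (Icc c d)) (hc : ψ c = 0) :
    √x * ∫ s in c..d, Complex.exp (-Complex.I * (x * ψ s ^ 2)) * (ψ' s * w s) =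
      fresnelIntegral (√x * ψ d) * w d - ∫ s in c..d, fresnelIntegral (√x * ψ s) * w' s := by
  rw [← uIcc_of_le hcd] at hψ hψ' hw hw'
  have hψc : ContinuousOn ψ (uIcc c d) := fun s hs => (hψ s hs).continuousAt.continuousWithinAt
  rw [intervalIntegral.integral_mul_deriv_eq_deriv_mul
    (fun s hs => hasDerivAt_fresnelIntegral_sqrt_mul hx (hψ s hs)) hw
    (ContinuousOn.intervalIntegrable (by fun_prop)) hw'.intervalIntegrable, hc, mul_zero,
    fresnelIntegral_zero, zero_mul, sub_zero, sub_sub_cancel, ← intervalIntegral.integral_const_mul]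
  exact intervalIntegral.integral_congr fun s _ => by ring

lemma tendsto_fresnelIntegral_sqrt_mul {u : ℝ} (hu : 0 < u) :
    Tendsto (fun x => fresnelIntegral (√x * u)) atTop (𝓝 fresnelLimit) :=
  tendsto_fresnelIntegral.comp (Real.tendsto_sqrt_atTop.atTop_mul_const hu)

lemma tendsto_integral_fresnelIntegral_mul (hcd : c ≤ d) (hψ : ContinuousOn ψ (Icc c d))
    (hw : ContinuousOn w (Icc c d)) (hpos : ∀ s ∈ Ioc c d, 0 < ψ s) :
    Tendsto (fun x => ∫ s in c..d, fresnelIntegral (√x * ψ s) * w s) atTop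
      (𝓝 (∫ s in c..d, fresnelLimit * w s)) := by
  rw [← uIcc_of_le hcd] at hψ hw
  rw [← uIoc_of_le hcd] at hpos
  refine intervalIntegral.tendsto_integral_filter_of_dominated_convergence (fun s => 2 * ‖w s‖)
    (.of_forall fun x => ?_) (.of_forall fun x => .of_forall fun s hs => ?_)
    (hw.norm.const_mul 2).intervalIntegrable
    (.of_forall fun s hs => (tendsto_fresnelIntegral_sqrt_mul (hpos s hs)).mul_const _)
  · exact ((continuous_fresnelIntegral.comp_continuousOn (by fun_prop)).mul
      hw).mono uIoc_subset_uIcc |>.aestronglyMeasurable measurableSet_uIoc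
  · rw [norm_mul]
    gcongr
    exact norm_fresnelIntegral_le (mul_nonneg (Real.sqrt_nonneg x) (hpos s hs).le)

theorem tendsto_sqrt_mul_integral_cexp_mul (hcd : c < d)
    (hψ : ∀ s ∈ Icc c d, HasDerivAt ψ (ψ' s) s) (hψ' : ContinuousOn ψ' (Icc c d))
    (hw : ∀ s ∈ Icc c d, HasDerivAt w (w' s) s) (hw' : ContinuousOn w' (Icc c d))
    (hc : ψ c = 0) (hpos : ∀ s ∈ Ioc c d, 0 < ψ s) :
    Tendsto (fun x : ℝ => √x * ∫ s in c..d, Complex.exp (-Complex.I * (x * ψ s ^ 2)) *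
      (ψ' s * w s)) atTop (𝓝 (fresnelLimit * w c)) := by
  have hψc : ContinuousOn ψ (Icc c d) := fun s hs => (hψ s hs).continuousAt.continuousWithinAt
  have hend := (tendsto_fresnelIntegral_sqrt_mul (hpos d (right_mem_Ioc.2 hcd))).mul_const (w d)
  have hlim := hend.sub (tendsto_integral_fresnelIntegral_mul hcd.le hψc hw' hpos)
  have hftc : ∫ s in c..d, w' s = w d - w c := by
    rw [← uIcc_of_le hcd.le] at hw hw'
    exact intervalIntegral.integral_eq_sub_of_hasDerivAt hw hw'.intervalIntegrable
  rw [intervalIntegral.integral_const_mul, hftc, ← mul_sub, sub_sub_cancel] at hlim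
  refine hlim.congr' ?_
  filter_upwards [eventually_ge_atTop 0] with x hx
  exact (sqrt_mul_integral_cexp_mul_eq hx hcd.le hψ hψ' hw hw' hc).symm

end Fresnel

/-! ### Asymptotics of `J_ν` at infinity -/

section Asymptotics

variable {ν : ℝ}

lemma angerIntegral_zero_eq (ν x : ℝ) : angerIntegral 0 ν x =
    2 * ∫ s in (0)..(π / 2), cos (x * cos s - ν * π / 2) * cos (ν * s) := by
  let f : ℝ → ℝ := fun s => cos (x * cos s - ν * π / 2 - ν * s)
  have hf : ∀ a b, IntervalIntegrable f volume a b :=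
    fun a b => (by fun_prop : Continuous f).intervalIntegrable a b
  have hf_neg : IntervalIntegrable (fun s => f (-s)) volume 0 (π / 2) :=
    (by fun_prop : Continuous fun s => f (-s)).intervalIntegrable _ _
  have hshift : angerIntegral 0 ν x = ∫ s in (-(π / 2))..(π / 2), f s := by
    have h := intervalIntegral.integral_comp_sub_right (a := 0) (b := π) f (π / 2)
    rw [zero_sub, sub_half] at h
    rw [← h, angerIntegral]
    refine intervalIntegral.integral_congr fun θ _ => ?_
    simp only [f, pow_zero, one_mul, Nat.cast_zero, zero_mul, add_zero, Real.cos_sub_pi_div_two]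
    ring_nf
  have hreflect : ∫ s in (-(π / 2))..0, f s = ∫ s in (0)..(π / 2), f (-s) := by
    rw [intervalIntegral.integral_comp_neg, neg_zero]
  rw [hshift, ← intervalIntegral.integral_add_adjacent_intervals (hf _ 0) (hf 0 _), hreflect,
    ← intervalIntegral.integral_add hf_neg (hf _ _), ← intervalIntegral.integral_const_mul]
  refine intervalIntegral.integral_congr fun s _ => ?_
  simp only [f, Real.cos_neg, mul_neg, sub_neg_eq_add, Real.cos_add, Real.cos_sub _ (ν * s)]
  ring

lemma hasDerivAt_sqrt_two_mul_sin_half (s : ℝ) :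
    HasDerivAt (fun s => √2 * sin (s / 2)) (cos (s / 2) / √2) s := by
  refine ((((hasDerivAt_id s).div_const 2).sin).const_mul (√2)).congr_deriv ?_
  simp only [id]
  field_simp
  rw [Real.sq_sqrt zero_le_two]

lemma cos_half_pos {s : ℝ} (hs : s ∈ Icc 0 (π / 2)) : 0 < cos (s / 2) :=
  Real.cos_pos_of_mem_Ioo ⟨by linarith [hs.1, Real.pi_pos], by linarith [hs.2, Real.pi_pos]⟩

lemma tendsto_sqrt_mul_integral_cexp_mul_cos (ν : ℝ) :
    Tendsto (fun x : ℝ => √x * ∫ s in (0)..(π / 2),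
      Complex.exp (-Complex.I * (x * (1 - cos s : ℝ))) * (cos (ν * s) : ℝ))
      atTop (𝓝 (fresnelLimit * (√2 : ℝ))) := by
  let w : ℝ → ℝ := fun s => √2 * cos (ν * s) / cos (s / 2)
  have hw : ∀ s ∈ Icc 0 (π / 2), HasDerivAt w ((√2 * (-sin (ν * s) * ν) * cos (s / 2) -
      √2 * cos (ν * s) * (-sin (s / 2) * (1 / 2))) / cos (s / 2) ^ 2) s := fun s hs => by
    have hνs : HasDerivAt (fun s => ν * s) ν s := by
      simpa only [mul_one, id] using (hasDerivAt_id s).const_mul ν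
    exact (hνs.cos.const_mul (√2)).fun_div ((hasDerivAt_id s).div_const 2).cos (cos_half_pos hs).ne'
  have hlim := tendsto_sqrt_mul_integral_cexp_mul (half_pos Real.pi_pos)
    (fun s _ => hasDerivAt_sqrt_two_mul_sin_half s) (by fun_prop)
    (fun s hs => (hw s hs).ofReal_comp)
    (Complex.continuous_ofReal.comp_continuousOn (.div (by fun_prop) (by fun_prop)
      fun s hs => pow_ne_zero 2 (cos_half_pos hs).ne'))
    (by simp) fun s hs => mul_pos (by positivity) (Real.sin_pos_of_pos_of_lt_pi
      (half_pos hs.1) (by linarith [hs.2, Real.pi_pos]))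
  have hw0 : w 0 = √2 := by simp [w]
  rw [hw0] at hlim
  refine hlim.congr fun x => congrArg _ (intervalIntegral.integral_congr fun s hs => ?_)
  rw [uIcc_of_le (by positivity)] at hs
  have hψ : (√2 * sin (s / 2)) ^ 2 = 1 - cos s := by
    rw [mul_pow, Real.sq_sqrt zero_le_two, Real.sin_sq_eq_half_sub, mul_div_cancel₀ s two_ne_zero]
    ring
  have hamp : cos (s / 2) / √2 * w s = cos (ν * s) := by
    have := (cos_half_pos hs).ne'
    simp only [w]
    field_simp
  simp only [← Complex.ofReal_pow, hψ, ← Complex.ofReal_mul (cos (s / 2) / √2), hamp]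

lemma re_cexp_mul_integral_cexp_mul {f w : ℝ → ℝ} (hf : Continuous f) (hw : Continuous w)
    (α x a b : ℝ) :
    (Complex.exp (α * Complex.I) * ∫ s in a..b, Complex.exp (-Complex.I * (x * f s)) * w s).re =
      ∫ s in a..b, cos (α - x * f s) * w s := by
  rw [← intervalIntegral.integral_const_mul, ← Complex.reCLM_apply,
    ← Complex.reCLM.intervalIntegral_comp_comm
      ((by fun_prop : Continuous _).intervalIntegrable _ _)]
  refine intervalIntegral.integral_congr fun s _ => ?_
  have hexp : Complex.exp (α * Complex.I) * Complex.exp (-Complex.I * (x * f s)) =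
      Complex.exp ((α - x * f s : ℝ) * Complex.I) := by
    rw [← Complex.exp_add]
    congr 1
    push_cast
    ring
  rw [Complex.reCLM_apply, ← mul_assoc, hexp, Complex.re_mul_ofReal, Complex.exp_ofReal_mul_I_re]

lemma re_cexp_mul_fresnelLimit (α : ℝ) :
    (Complex.exp (α * Complex.I) * fresnelLimit).re = √π / 2 * cos (α - π / 4) := by
  have hexp : Complex.exp (α * Complex.I) * fresnelLimit =
      (√π / 2 : ℝ) * Complex.exp ((α - π / 4 : ℝ) * Complex.I) := by
    rw [fresnelLimit, Complex.ofReal_sub, sub_mul, sub_eq_add_neg, Complex.exp_add]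
    push_cast
    ring_nf
  rw [hexp, Complex.re_ofReal_mul, Complex.exp_ofReal_mul_I_re]

lemma sqrt_mul_angerIntegral_zero_sub_eq_re (ν x : ℝ) :
    √x * angerIntegral 0 ν x - √2 * √π * cos (x - ν * π / 2 - π / 4) =
      2 * (Complex.exp ((x - ν * π / 2 : ℝ) * Complex.I) * (√x * (∫ s in (0)..(π / 2),
        Complex.exp (-Complex.I * (x * (1 - cos s : ℝ))) * (cos (ν * s) : ℝ)) -
          fresnelLimit * (√2 : ℝ))).re := by
  rw [mul_sub, Complex.sub_re, mul_left_comm, Complex.re_ofReal_mul, ← mul_assoc,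
    Complex.re_mul_ofReal, re_cexp_mul_fresnelLimit,
    re_cexp_mul_integral_cexp_mul (by fun_prop) (by fun_prop), angerIntegral_zero_eq]
  have harg : ∀ s, x - ν * π / 2 - x * (1 - cos s) = x * cos s - ν * π / 2 := fun s => by ring
  simp only [harg]
  ring

lemma tendsto_sqrt_mul_angerIntegral_zero (ν : ℝ) :
    Tendsto (fun x => √x * angerIntegral 0 ν x - √2 * √π * cos (x - ν * π / 2 - π / 4)) atTop
      (𝓝 0) := by
  have hlim := (tendsto_iff_norm_sub_tendsto_zero.1
    (tendsto_sqrt_mul_integral_cexp_mul_cos ν)).const_mul 2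
  rw [mul_zero] at hlim
  refine squeeze_zero_norm (fun x => ?_) hlim
  rw [sqrt_mul_angerIntegral_zero_sub_eq_re, norm_mul, Real.norm_two]
  gcongr
  refine (Complex.abs_re_le_norm _).trans_eq ?_
  rw [norm_mul, Complex.norm_exp_ofReal_mul_I, one_mul]

lemma tendsto_sqrt_mul_schlafliIntegral_zero (hν : 0 ≤ ν) :
    Tendsto (fun x => √x * schlafliIntegral 0 ν x) atTop (𝓝 0) := by
  refine squeeze_zero_norm' ?_ (tendsto_inv_atTop_zero.comp Real.tendsto_sqrt_atTop)
  filter_upwards [eventually_gt_atTop 0] with x hx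
  rw [norm_mul, Real.norm_of_nonneg (Real.sqrt_nonneg x)]
  calc √x * |schlafliIntegral 0 ν x|
      ≤ √x * (1 / x) := by
        gcongr
        exact (abs_schlafliIntegral_zero_le hx.le (by positivity)).trans
          (one_div_le_one_div_of_le hx (le_add_of_nonneg_right hν))
    _ = (√x)⁻¹ := by rw [mul_one_div, Real.sqrt_div_self', one_div]

lemma tendsto_sqrt_mul_besselJ (hν : 0 ≤ ν) :
    Tendsto (fun x => √(π / 2) * √x * besselJ ν x - cos (x - ν * π / 2 - π / 4)) atTop (𝓝 0) := by
  have hlim := ((tendsto_sqrt_mul_angerIntegral_zero ν).const_mul (√(π / 2) / π)).sub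
    ((tendsto_sqrt_mul_schlafliIntegral_zero hν).const_mul (√(π / 2) * (sin (ν * π) / π)))
  rw [mul_zero, mul_zero, sub_zero] at hlim
  refine hlim.congr fun x => ?_
  have hnorm : √(π / 2) / π * (√2 * √π) = 1 := by
    rw [div_mul_eq_mul_div, ← mul_assoc, ← Real.sqrt_mul (by positivity),
      div_mul_cancel₀ _ two_ne_zero, Real.mul_self_sqrt Real.pi_pos.le, div_self Real.pi_ne_zero]
  rw [← besselJDeriv_zero, besselJDeriv]
  linear_combination -cos (x - ν * π / 2 - π / 4) * hnorm

lemma tendsto_sqrt_mul_besselJ_sub_cos_debyePhase (hν : 0 < ν) :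
    Tendsto (fun x => √(π / 2) * √x * besselJ ν x - cos (debyePhase ν x - π / 4)) atTop (𝓝 0) := by
  have hcos : Tendsto (fun x => cos (x - ν * π / 2 - π / 4) - cos (debyePhase ν x - π / 4)) atTop
      (𝓝 0) := by
    refine squeeze_zero_norm (fun x => ?_) (tendsto_zero_iff_norm_tendsto_zero.1
      (tendsto_sub_debyePhase hν))
    refine (Real.abs_cos_sub_cos_le _ _).trans_eq ?_
    rw [sub_sub_sub_cancel_right]
    rfl
  have hlim := (tendsto_sqrt_mul_besselJ hν.le).add hcos
  rw [add_zero] at hlim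
  exact hlim.congr fun x => sub_add_sub_cancel _ _ _

end Asymptotics

/-! ### Zeros of `J_ν` -/

section Zeros

variable {c ν j : ℝ} {k : ℕ}

lemma ncard_zeros_comp_exp_inter_Iio_log (f : ℝ → ℝ) (hj : 0 < j) :
    ({t | f (exp t) = 0} ∩ Iio (log j)).ncard = {x | 0 < x ∧ x < j ∧ f x = 0}.ncard := by
  rw [← ncard_image_of_injective _ Real.exp_injective]
  congr 1
  ext x
  constructor
  · rintro ⟨t, ⟨hzero, hlt⟩, rfl⟩
    exact ⟨exp_pos t, (Real.lt_log_iff_exp_lt hj).1 hlt, hzero⟩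
  · rintro ⟨hpos, hlt, hzero⟩
    refine ⟨log x, ⟨?_, Real.log_lt_log hpos hlt⟩, Real.exp_log hpos⟩
    rwa [mem_ofPred_eq, Real.exp_log hpos]

theorem IsKthZero.debyePhase_bounds (h : IsKthZero ν k j) (hν : 0 < ν) (hk : 1 ≤ k) :
    (k - 1 / 4) * π ≤ debyePhase ν j ∧
      debyePhase ν j ≤ (k - 1 / 4) * π + debyeCorrection ν j := by
  obtain ⟨hj, hzero, hcard⟩ := h
  obtain ⟨M, hM⟩ := exists_abs_besselJ_le hν
  have hbounds := (turningPointPhase_debyePhase hν).phase_zero_bounds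
    (linearODESol_besselJ_exp hν) (fun t => hM _ (exp_pos t))
    ((tendsto_debyePhase_atTop hν).comp Real.tendsto_exp_atTop)
    (w := fun t => √(π / 2) * √(exp t)) (fun t => by positivity)
    ((tendsto_sqrt_mul_besselJ_sub_cos_debyePhase hν).comp Real.tendsto_exp_atTop)
    (a := log j) (by rwa [Real.exp_log hj])
  have hk' : ((k - 1 : ℕ) : ℝ) + 3 / 4 = k - 1 / 4 := by
    rw [Nat.cast_pred hk]
    ring
  rwa [ncard_zeros_comp_exp_inter_Iio_log _ hj, hcard, hk', Real.exp_log hj] at hbounds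

lemma debyePhase_le_self (hν : 0 ≤ ν) (hj : 0 ≤ j) : debyePhase ν j ≤ j := by
  have hsqrt : √(j ^ 2 - ν ^ 2) ≤ j := (Real.sqrt_le_left hj).2 (sub_le_self _ (sq_nonneg ν))
  exact (sub_le_self _ (mul_nonneg hν (Real.arccos_nonneg _))).trans hsqrt

lemma one_sub_one_div_one_add_sq_pos (hc : 0 < c) : 0 < 1 - (1 / (1 + c)) ^ 2 :=
  sub_pos.2 (pow_lt_one₀ (by positivity) ((div_lt_one (by positivity)).2 (by linarith)) two_ne_zero)

lemma debyeCorrection_le (hc : 0 < c) (hν : 0 ≤ ν) (hj : 0 < j) (hνj : (1 + c) * ν ≤ j) :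
    debyeCorrection ν j ≤ 1 / (2 * √(1 - (1 / (1 + c)) ^ 2) ^ 3) / j := by
  have hratio : ν / j ≤ 1 / (1 + c) := by
    rw [div_le_div_iff₀ hj (by positivity)]
    linarith
  have hsqrt : √(1 - (1 / (1 + c)) ^ 2) * j ≤ √(j ^ 2 - ν ^ 2) := by
    rw [← le_div_iff₀ hj, ← sqrt_one_sub_div_sq hj]
    gcongr
  have hκ := Real.sqrt_pos.2 (one_sub_one_div_one_add_sq_pos hc)
  calc debyeCorrection ν j
      ≤ j ^ 2 / (2 * (√(1 - (1 / (1 + c)) ^ 2) * j) ^ 3) := by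
        rw [debyeCorrection]
        gcongr
    _ = 1 / (2 * √(1 - (1 / (1 + c)) ^ 2) ^ 3) / j := by field_simp

lemma IsKthZero.add_le (h : IsKthZero ν k j) (hν : 0 < ν) (hk : 1 ≤ k) (hνj : ν ≤ j) :
    ν + k ≤ 3 * j := by
  have hphase : (k - 1 / 4) * π ≤ j :=
    (h.debyePhase_bounds hν hk).1.trans (debyePhase_le_self hν.le h.1.le)
  have hk' : (1 : ℝ) ≤ k := Nat.one_le_cast.2 hk
  nlinarith [Real.pi_gt_three]

theorem IsKthZero.abs_mul_gfun_sub_le (h : IsKthZero ν k j) (hν : 0 < ν) (hk : 1 ≤ k) :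
    |j * gfun (ν / j) - (k - 1 / 4)| ≤ debyeCorrection ν j := by
  obtain ⟨hlower, hupper⟩ := h.debyePhase_bounds hν hk
  have hnonneg := sub_nonneg.2 hlower
  rw [mul_gfun_div h.1, ← mul_div_cancel_right₀ ((k : ℝ) - 1 / 4) Real.pi_ne_zero, ← sub_div,
    abs_of_nonneg (by positivity)]
  exact (div_le_self hnonneg (by linarith [Real.pi_gt_three])).trans (sub_le_iff_le_add'.2 hupper)

end Zeros

theorem zero_approx_large_nu_away_general (c : ℝ) (hc : 0 < c) :
    ∃ C : ℝ, 0 < C ∧ ∀ ν : ℝ, 0 < ν → ∀ k : ℕ, 1 ≤ k → ∀ j : ℝ,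
      IsKthZero ν k j → (1 + c) * ν ≤ j →
      |j * gfun (ν / j) - ((k : ℝ) - 1 / 4)| ≤ C / (ν + (k : ℝ)) := by
  have hκ : 0 < √(1 - (1 / (1 + c)) ^ 2) := Real.sqrt_pos.2 (one_sub_one_div_one_add_sq_pos hc)
  refine ⟨3 / (2 * √(1 - (1 / (1 + c)) ^ 2) ^ 3), by positivity, fun ν hν k hk j h hνj => ?_⟩
  have hj := h.1
  have hadd : ν + k ≤ 3 * j := h.add_le hν hk (by nlinarith)
  calc |j * gfun (ν / j) - (k - 1 / 4)|
      ≤ debyeCorrection ν j := h.abs_mul_gfun_sub_le hν hk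
    _ ≤ 1 / (2 * √(1 - (1 / (1 + c)) ^ 2) ^ 3) / j := debyeCorrection_le hc hν.le hj hνj
    _ = 3 / (2 * √(1 - (1 / (1 + c)) ^ 2) ^ 3) / (3 * j) := by field_simp
    _ ≤ 3 / (2 * √(1 - (1 / (1 + c)) ^ 2) ^ 3) / (ν + k) := by gcongr

/-- for large `ν`, the zeros with `j ≥ (1+c)ν` satisfy
`j g(ν/j) = k - 1/4 + O(1/(ν+k))`. -/
theorem zero_approx_large_nu_away (c : ℝ) (hc : 0 < c) :
    ∃ N C : ℝ, 0 < N ∧ 0 < C ∧ ∀ ν : ℝ, N ≤ ν → ∀ k : ℕ, 1 ≤ k → ∀ j : ℝ,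
      IsKthZero ν k j → (1 + c) * ν ≤ j →
      |j * gfun (ν / j) - ((k : ℝ) - 1 / 4)| ≤ C / (ν + (k : ℝ)) := by
  obtain ⟨C, hC, hbound⟩ := zero_approx_large_nu_away_general c hc
  exact ⟨1, C, one_pos, hC, fun ν hν => hbound ν (one_pos.trans_le hν)⟩
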